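/- arXiv:2003.09102 — 3 statements merged into one kernel-verified Lean document; each statement's English description precedes it below -/
import Mathlib

section
/- There is an absolute constant K such that for every prime p ≥ 5 and every real X with p³ ≤ X, one has | |E_{p,0,0}(X)| − ((p⁸−1)/(p^{10}−1))·(4/ζ(10))·X^{5/6} | ≤ K·p·X^{1/2}, where E_{p,0,0}(X) is the set of (A,B) ∈ E(X) with p ∣ A and p ∣ B (equivalently, the curves y²=x³+Ax+B in the family with additive reduction at p) and ζ is the Riemann zeta function. -/
/-- Condition (M): for every prime `q`, `q⁴ ∣ A` implies `q⁶ ∤ B`. -/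
def CondM (A B : ℤ) : Prop := ∀ q : ℕ, q.Prime → (q : ℤ) ^ 4 ∣ A → ¬ (q : ℤ) ^ 6 ∣ B

/-- The family `E(X)`: pairs `(A,B)` with `4A³+27B² ≠ 0`, naive height at most `X`,
satisfying condition (M). -/
def Efam (X : ℝ) : Set (ℤ × ℤ) :=
  {AB | 4 * AB.1 ^ 3 + 27 * AB.2 ^ 2 ≠ 0 ∧ ((max (|AB.1| ^ 3) (AB.2 ^ 2) : ℤ) : ℝ) ≤ X ∧
        CondM AB.1 AB.2}


lemma moebius_sum_divisors (D : ℕ) :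
    ∑ d ∈ D.divisors, ArithmeticFunction.moebius d = if D = 1 then 1 else 0 := by
  have h := congrArg (fun f => f D) ArithmeticFunction.coe_zeta_mul_moebius
  simp only [ArithmeticFunction.coe_zeta_mul_apply, ArithmeticFunction.one_apply] at h
  exact h

lemma exists_D (A B : ℤ) (h : A ≠ 0 ∨ B ≠ 0) :
    ∃ D : ℕ, 0 < D ∧ D ≤ A.natAbs + B.natAbs ∧
      ∀ d : ℕ, ((d : ℤ) ^ 4 ∣ A ∧ (d : ℤ) ^ 6 ∣ B) ↔ d ∣ D := by
  classical
  have key : ∀ d : ℕ, ((d : ℤ) ^ 4 ∣ A ∧ (d : ℤ) ^ 6 ∣ B) ↔ (d ^ 4 ∣ A.natAbs ∧ d ^ 6 ∣ B.natAbs) := by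
    intro d
    rw [← Int.natCast_dvd, ← Int.natCast_dvd]; push_cast; rfl
  simp only [key]
  have hb : ∀ d : ℕ, (d ^ 4 ∣ A.natAbs ∧ d ^ 6 ∣ B.natAbs) → d ≤ A.natAbs + B.natAbs := by
    rintro d ⟨h1, h2⟩
    rcases h with h | h
    · have := Nat.le_of_dvd (Int.natAbs_pos.2 h) h1
      have := Nat.le_self_pow (n := 4) (by norm_num) d
      omega
    · have := Nat.le_of_dvd (Int.natAbs_pos.2 h) h2
      have := Nat.le_self_pow (n := 6) (by norm_num) d
      omega
  set P : ℕ → Prop := fun d => d ^ 4 ∣ A.natAbs ∧ d ^ 6 ∣ B.natAbs with hP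
  have h1 : P 1 := by simp [hP]
  have hpos : A.natAbs + B.natAbs ≥ 1 := by omega
  have hM := Nat.findGreatest_spec (P := P) hpos h1
  have hM1 : 1 ≤ Nat.findGreatest P (A.natAbs + B.natAbs) := Nat.le_findGreatest hpos h1
  refine ⟨Nat.findGreatest P (A.natAbs + B.natAbs), hM1, Nat.findGreatest_le _, ?_⟩
  set D := Nat.findGreatest P (A.natAbs + B.natAbs)
  intro d
  constructor
  · intro hd
    have hl : P (Nat.lcm d D) := by
      constructor
      · rw [← Nat.pow_lcm_pow]; exact Nat.lcm_dvd hd.1 hM.1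
      · rw [← Nat.pow_lcm_pow]; exact Nat.lcm_dvd hd.2 hM.2
    have hle : Nat.lcm d D ≤ D := Nat.le_findGreatest (hb _ hl) hl
    have : Nat.lcm d D = D := le_antisymm hle (Nat.le_of_dvd (Nat.pos_of_ne_zero (by
      intro h0
      rw [h0] at hl
      simp [hP] at hl
      omega)) (Nat.dvd_lcm_right d D))
    rw [← this]; exact Nat.dvd_lcm_left d D
  · intro hd
    exact ⟨(pow_dvd_pow_of_dvd hd 4).trans hM.1, (pow_dvd_pow_of_dvd hd 6).trans hM.2⟩

open Classical in
lemma moebius_ind (A B : ℤ) (h : A ≠ 0 ∨ B ≠ 0) (N : ℕ) (hN : A.natAbs + B.natAbs < N) :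
    ∑ d ∈ Finset.range N, (if (d : ℤ) ^ 4 ∣ A ∧ (d : ℤ) ^ 6 ∣ B then ArithmeticFunction.moebius d else 0)
      = if CondM A B then 1 else 0 := by
  obtain ⟨D, hD, hle, hd⟩ := exists_D A B h
  simp only [hd]
  rw [← Finset.sum_filter]
  have : (Finset.range N).filter (fun d => d ∣ D) = D.divisors := by
    ext d
    simp only [Finset.mem_filter, Finset.mem_range, Nat.mem_divisors]
    constructor
    · rintro ⟨_, h⟩; exact ⟨h, by omega⟩
    · rintro ⟨h, _⟩; exact ⟨by have := Nat.le_of_dvd hD h; omega, h⟩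
  rw [this, moebius_sum_divisors D]
  have : D = 1 ↔ CondM A B := by
    constructor
    · rintro rfl q hq h4 h6
      have := (hd q).1 ⟨h4, h6⟩
      exact hq.one_lt.ne' (Nat.dvd_one.1 this)
    · intro hM
      by_contra hne
      obtain ⟨q, hq, hqD⟩ := Nat.exists_prime_and_dvd hne
      have := (hd q).2 hqD
      exact hM q hq this.1 this.2
  simp [this]

lemma card_mult (a : ℝ) (m : ℕ) (hm : 0 < m) (ha : 0 ≤ a) :
    ((((Finset.Icc (-⌊a⌋) ⌊a⌋).filter (fun x : ℤ => (m : ℤ) ∣ x)).card : ℕ) : ℝ) = 2 * ⌊a / m⌋ + 1 := by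
  have hm' : (0:ℝ) < m := by exact_mod_cast hm
  have hk : 0 ≤ ⌊a / m⌋ := Int.floor_nonneg.2 (by positivity)
  have : (Finset.Icc (-⌊a⌋) ⌊a⌋).filter (fun x : ℤ => (m : ℤ) ∣ x)
      = (Finset.Icc (-⌊a / m⌋) ⌊a / m⌋).image (fun t : ℤ => (m : ℤ) * t) := by
    ext x
    simp only [Finset.mem_filter, Finset.mem_image, Finset.mem_Icc, ← abs_le]
    rw [Int.le_floor]
    simp only [Int.le_floor]
    constructor
    · rintro ⟨h, t, rfl⟩
      refine ⟨t, ?_, rfl⟩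
      rw [le_div_iff₀ hm']
      simp [abs_mul] at h ⊢
      linarith
    · rintro ⟨t, h, rfl⟩
      refine ⟨?_, dvd_mul_right _ _⟩
      rw [le_div_iff₀ hm'] at h
      simp [abs_mul] at h ⊢
      linarith
  rw [this, Finset.card_image_of_injective _ (mul_right_injective₀ (by exact_mod_cast hm.ne')), Int.card_Icc]
  have h2 : (((⌊a / m⌋ + 1 - -⌊a / m⌋).toNat : ℤ) : ℝ) = 2 * ⌊a / m⌋ + 1 := by
    rw [Int.toNat_of_nonneg (by omega)]; push_cast; ring
  exact_mod_cast h2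

/-- The real value of `1/ζ(10)`. -/
lemma hasSum_mu : HasSum (fun n : ℕ => (ArithmeticFunction.moebius n : ℝ) / (n : ℝ) ^ 10)
    (1 / (riemannZeta 10).re) := by
  have h10 : (1:ℝ) < (10 : ℂ).re := by norm_num
  have hs := (ArithmeticFunction.LSeriesSummable_moebius_iff (s := 10)).2 h10
  have h1 := ArithmeticFunction.LSeries_zeta_mul_Lseries_moebius h10
  rw [ArithmeticFunction.LSeries_zeta_eq_riemannZeta h10] at h1
  have hh := hs.LSeriesHasSum
  unfold LSeriesHasSum at hh
  have hf : (LSeries.term (fun n => ((ArithmeticFunction.moebius n : ℤ) : ℂ)) 10)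
      = fun n : ℕ => (((ArithmeticFunction.moebius n : ℝ) / (n : ℝ) ^ 10 : ℝ) : ℂ) := by
    ext n
    rcases eq_or_ne n 0 with rfl | hn
    · simp
    · rw [LSeries.term_of_ne_zero hn]
      push_cast
      congr 1
      exact_mod_cast Complex.cpow_natCast (n:ℂ) 10
  rw [hf] at hh
  obtain ⟨hr⟩ : Nonempty (Summable (fun n : ℕ => (ArithmeticFunction.moebius n : ℝ) / (n : ℝ) ^ 10)) :=
    ⟨by exact_mod_cast hh.summable⟩
  have hS := hr.hasSum
  set S := ∑' n : ℕ, (ArithmeticFunction.moebius n : ℝ) / (n : ℝ) ^ 10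
  have h2 := (Complex.hasSum_ofReal.2 hS).unique hh
  rw [← h2] at h1
  have h3 : riemannZeta 10 = ((S⁻¹ : ℝ) : ℂ) := by
    push_cast
    exact eq_inv_of_mul_eq_one_left h1
  rw [h3, Complex.ofReal_re]
  simpa using hS

lemma HasSum.congr_fun' {f g : ℕ → ℝ} {a : ℝ} (h : HasSum f a) (hfg : ∀ n, g n = f n) :
    HasSum g a := by
  rw [funext hfg]; exact h

lemma hasSum_mu_p (p : ℕ) (hp : p.Prime) (S : ℝ)
    (hS : HasSum (fun n : ℕ => (ArithmeticFunction.moebius n : ℝ) / (n : ℝ) ^ 10) S) :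
    HasSum (fun d : ℕ => (ArithmeticFunction.moebius d : ℝ) /
      ((Nat.lcm p (d ^ 4) : ℝ) * (Nat.lcm p (d ^ 6) : ℝ)))
      (((p : ℝ) ^ 8 - 1) / ((p : ℝ) ^ 10 - 1) * S) := by
  classical
  have hp0 : (0:ℝ) < p := by exact_mod_cast hp.pos
  have hp1 : (1:ℝ) < p := by exact_mod_cast hp.one_lt
  set f : ℕ → ℝ := fun n => (ArithmeticFunction.moebius n : ℝ) / (n : ℝ) ^ 10 with hf
  set h : ℕ → ℝ := fun n => if p ∣ n then 0 else f n with hh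
  set k : ℕ → ℝ := fun n => if p ∣ n then f n else 0 with hk
  have hsum : Summable h := by
    refine Summable.of_norm_bounded hS.summable.norm ?_
    intro n
    simp only [hh]
    split_ifs <;> simp
  have hT := hsum.hasSum
  set T := ∑' n, h n
  have hkT : HasSum k (-((p:ℝ) ^ 10)⁻¹ * T) := by
    have hinj : Function.Injective (fun e : ℕ => p * e) := mul_right_injective₀ hp.ne_zero
    rw [← hinj.hasSum_iff]
    · have := hT.mul_left (-((p:ℝ) ^ 10)⁻¹)
      refine this.congr_fun' ?_
      intro e
      simp only [Function.comp, hk, hh, hf, dvd_mul_right, if_true]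
      split_ifs with hd
      · have : ArithmeticFunction.moebius (p * e) = 0 := by
          apply ArithmeticFunction.moebius_eq_zero_of_not_squarefree
          intro hsq
          have := hsq p (mul_dvd_mul_left p hd)
          exact hp.one_lt.ne' (Nat.isUnit_iff.1 this)
        simp [this]
      · have hc : Nat.Coprime p e := (Nat.Prime.coprime_iff_not_dvd hp).2 hd
        rw [ArithmeticFunction.isMultiplicative_moebius.map_mul_of_coprime hc,
          ArithmeticFunction.moebius_apply_prime hp]
        push_cast
        rw [mul_pow]
        field_simp
    · intro x hx
      simp only [hk]
      rw [if_neg]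
      rintro ⟨e, rfl⟩
      exact hx ⟨e, rfl⟩
  have hST : S = T + -((p:ℝ) ^ 10)⁻¹ * T := by
    refine hS.unique ?_
    refine (hT.add hkT).congr_fun' ?_
    intro n
    simp only [hh, hk]
    split_ifs <;> simp [hf]
  have hfin := (hT.mul_left (((p:ℝ) ^ 2)⁻¹)).add hkT
  have hval : ((p : ℝ) ^ 8 - 1) / ((p : ℝ) ^ 10 - 1) * S = (((p:ℝ) ^ 2)⁻¹ * T) + -((p:ℝ) ^ 10)⁻¹ * T := by
    rw [hST]
    have : (p:ℝ) ^ 10 - 1 ≠ 0 := (sub_pos.2 (one_lt_pow₀ hp1 (by norm_num))).ne'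
    field_simp
    ring
  rw [hval]
  refine hfin.congr_fun' ?_
  · intro d
    simp only [hh, hk]
    split_ifs with hd
    · rw [Nat.lcm_eq_right (hd.trans (dvd_pow_self d (by norm_num))), Nat.lcm_eq_right (hd.trans (dvd_pow_self d (by norm_num)))]
      simp only [hf]; push_cast; rw [← pow_add]; simp
    · have hc : Nat.Coprime p d := (Nat.Prime.coprime_iff_not_dvd hp).2 hd
      rw [(hc.pow_right 4).lcm_eq_mul, (hc.pow_right 6).lcm_eq_mul]
      have : (d:ℝ) ≠ 0 := by
        rintro h0
        apply hd
        have : d = 0 := by exact_mod_cast h0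
        simp [this]
      simp only [hf]; push_cast
      field_simp
      simp
/-- symmetric integer interval -/
noncomputable def symI (a : ℝ) : Finset ℤ := Finset.Icc (-⌊a⌋) ⌊a⌋

lemma mem_symI (a : ℝ) (x : ℤ) : x ∈ symI a ↔ |(x : ℝ)| ≤ a := by
  unfold symI
  rw [Finset.mem_Icc, ← abs_le, Int.le_floor]
  push_cast
  rfl

/-- The nonzero pairs in the box which are divisible by `p`. -/
noncomputable def boxp (p : ℕ) (y : ℝ) : Finset (ℤ × ℤ) :=
  ((symI (y ^ 4) ×ˢ symI (y ^ 6)).filter (fun x => (p : ℤ) ∣ x.1 ∧ (p : ℤ) ∣ x.2)).erase 0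

lemma abs_aux (x y u v : ℝ) (hx : 0 ≤ x) (hy : 0 ≤ y) (hu : |u - 2 * x| ≤ 1) (hv : |v - 2 * y| ≤ 1) :
    |(u * v - 1) - 4 * (x * y)| ≤ 2 * x + 2 * y + 2 := by
  rw [abs_le] at hu hv
  have e : u * v - 1 - 4 * (x * y) = (u - 2 * x) * (v - 2 * y) + 2 * x * (v - 2 * y) + 2 * y * (u - 2 * x) - 1 := by ring
  have h1 : |(u - 2 * x) * (v - 2 * y)| ≤ 1 := by
    rw [abs_mul]
    exact mul_le_one₀ (abs_le.2 hu) (abs_nonneg _) (abs_le.2 hv)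
  rw [abs_le] at h1
  rw [e, abs_le]
  constructor <;> nlinarith [mul_le_mul_of_nonneg_left hv.1 hx, mul_le_mul_of_nonneg_left hv.2 hx,
    mul_le_mul_of_nonneg_left hu.1 hy, mul_le_mul_of_nonneg_left hu.2 hy]

lemma Nd_bound (p : ℕ) (hp : 0 < p) (y : ℝ) (hy : 1 ≤ y) (d : ℕ) (hd : 0 < d) :
    |((((boxp p y).filter (fun x => (d : ℤ) ^ 4 ∣ x.1 ∧ (d : ℤ) ^ 6 ∣ x.2)).card : ℕ) : ℝ)
      - 4 * y ^ 10 / ((Nat.lcm p (d ^ 4) : ℝ) * (Nat.lcm p (d ^ 6) : ℝ))| ≤ 6 * y ^ 6 * (1 / (d : ℝ) ^ 2) := by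
  set m := Nat.lcm p (d ^ 4) with hm
  set n := Nat.lcm p (d ^ 6) with hn
  have hm0 : 0 < m := Nat.lcm_pos hp (by positivity)
  have hn0 : 0 < n := Nat.lcm_pos hp (by positivity)
  have hy0 : 0 < y := by linarith
  have hmd : (d : ℝ) ^ 4 ≤ m := by exact_mod_cast Nat.le_of_dvd hm0 (Nat.dvd_lcm_right _ _)
  have hnd : (d : ℝ) ^ 6 ≤ n := by exact_mod_cast Nat.le_of_dvd hn0 (Nat.dvd_lcm_right _ _)
  have hset : (boxp p y).filter (fun x => (d : ℤ) ^ 4 ∣ x.1 ∧ (d : ℤ) ^ 6 ∣ x.2)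
      = (((symI (y ^ 4)).filter (fun x : ℤ => (m : ℤ) ∣ x)) ×ˢ
        ((symI (y ^ 6)).filter (fun x : ℤ => (n : ℤ) ∣ x))).erase 0 := by
    ext ⟨A, B⟩
    have h1 : (m : ℤ) ∣ A ↔ (p : ℤ) ∣ A ∧ (d : ℤ) ^ 4 ∣ A := by
      rw [Int.natCast_dvd, hm, Nat.lcm_dvd_iff, ← Int.natCast_dvd, ← Int.natCast_dvd]; push_cast; rfl
    have h2 : (n : ℤ) ∣ B ↔ (p : ℤ) ∣ B ∧ (d : ℤ) ^ 6 ∣ B := by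
      rw [Int.natCast_dvd, hn, Nat.lcm_dvd_iff, ← Int.natCast_dvd, ← Int.natCast_dvd]; push_cast; rfl
    simp only [boxp, Finset.mem_filter, Finset.mem_erase, Finset.mem_product, h1, h2]
    tauto
  have hzero : (0 : ℤ × ℤ) ∈ (((symI (y ^ 4)).filter (fun x : ℤ => (m : ℤ) ∣ x)) ×ˢ
        ((symI (y ^ 6)).filter (fun x : ℤ => (n : ℤ) ∣ x))) := by
    simp only [Finset.mem_product, Finset.mem_filter, mem_symI]
    simp
    exact ⟨by positivity, by positivity⟩
  have hcard : ((((boxp p y).filter (fun x => (d : ℤ) ^ 4 ∣ x.1 ∧ (d : ℤ) ^ 6 ∣ x.2)).card : ℕ) : ℝ)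
      = (2 * ⌊y ^ 4 / m⌋ + 1) * (2 * ⌊y ^ 6 / n⌋ + 1) - 1 := by
    rw [hset, Finset.card_erase_of_mem hzero, Nat.cast_sub (Finset.card_pos.2 ⟨_, hzero⟩),
      Finset.card_product, Nat.cast_mul]
    unfold symI
    rw [card_mult _ m hm0 (by positivity), card_mult _ n hn0 (by positivity)]
    simp
  rw [hcard]
  have hm' : (0:ℝ) < m := by exact_mod_cast hm0
  have hn' : (0:ℝ) < n := by exact_mod_cast hn0
  have hd1 : (1:ℝ) ≤ d := by exact_mod_cast hd
  have hd0 : (0:ℝ) < d := by linarith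
  have e : 4 * y ^ 10 / ((m:ℝ) * n) = 4 * ((y ^ 4 / m) * (y ^ 6 / n)) := by
    field_simp
  rw [e]
  set x := y ^ 4 / m with hx
  set z := y ^ 6 / n with hz
  have hx0 : 0 ≤ x := by positivity
  have hz0 : 0 ≤ z := by positivity
  have hxb : x ≤ y ^ 6 * (1 / (d:ℝ) ^ 2) := by
    rw [hx, ← div_eq_mul_one_div]
    have : y ^ 4 ≤ y ^ 6 := pow_le_pow_right₀ hy (by norm_num)
    have : (d:ℝ) ^ 2 ≤ d ^ 4 := pow_le_pow_right₀ hd1 (by norm_num)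
    gcongr
    linarith
  have hzb : z ≤ y ^ 6 * (1 / (d:ℝ) ^ 2) := by
    rw [hz, ← div_eq_mul_one_div]
    have : (d:ℝ) ^ 2 ≤ d ^ 6 := pow_le_pow_right₀ hd1 (by norm_num)
    gcongr
    linarith
  by_cases hdy : (d:ℝ) ≤ y
  · have h1 : 1 ≤ y ^ 6 * (1 / (d:ℝ) ^ 2) := by
      rw [← div_eq_mul_one_div, one_le_div (by positivity)]
      calc (d:ℝ) ^ 2 ≤ y ^ 2 := by gcongr
        _ ≤ y ^ 6 := pow_le_pow_right₀ hy (by norm_num)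
    have hfl : ∀ t : ℝ, |((2 * ⌊t⌋ + 1 : ℝ)) - 2 * t| ≤ 1 := by
      intro t
      have := Int.floor_le t
      have := Int.lt_floor_add_one t
      rw [abs_le]; constructor <;> linarith
    have := abs_aux x z _ _ hx0 hz0 (hfl x) (hfl z)
    linarith
  · push Not at hdy
    have hx1 : x < 1 := by
      rw [hx, div_lt_one hm']
      exact lt_of_lt_of_le (pow_lt_pow_left₀ hdy hy0.le (by norm_num)) hmd
    have hz1 : z < 1 := by
      rw [hz, div_lt_one hn']
      exact lt_of_lt_of_le (pow_lt_pow_left₀ hdy hy0.le (by norm_num)) hnd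
    have f1 : ⌊x⌋ = 0 := Int.floor_eq_zero_iff.2 ⟨hx0, hx1⟩
    have f2 : ⌊z⌋ = 0 := Int.floor_eq_zero_iff.2 ⟨hz0, hz1⟩
    rw [f1, f2]
    have hxz : x * z ≤ z := mul_le_of_le_one_left hz0 hx1.le
    have hxz0 : 0 ≤ x * z := by positivity
    have e2 : ((2 * ((0 : ℤ) : ℝ) + 1) * (2 * ((0 : ℤ) : ℝ) + 1) - 1) - 4 * (x * z) = -(4 * (x * z)) := by
      push_cast; ring
    rw [e2, abs_neg, abs_of_nonneg (by positivity)]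
    linarith

open Classical in
lemma count_M (p : ℕ) (y : ℝ) : ∃ N0 : ℕ, ∀ N ≥ N0,
    (((boxp p y).filter (fun x => CondM x.1 x.2)).card : ℝ) =
      ∑ d ∈ Finset.range N, (ArithmeticFunction.moebius d : ℝ) *
        (((boxp p y).filter (fun x => (d : ℤ) ^ 4 ∣ x.1 ∧ (d : ℤ) ^ 6 ∣ x.2)).card : ℝ) := by
  refine ⟨(boxp p y).sup (fun x => x.1.natAbs + x.2.natAbs) + 1, fun N hN => ?_⟩
  have h : (((boxp p y).filter (fun x => CondM x.1 x.2)).card : ℤ) =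
      ∑ d ∈ Finset.range N, (ArithmeticFunction.moebius d) *
        (((boxp p y).filter (fun x => (d : ℤ) ^ 4 ∣ x.1 ∧ (d : ℤ) ^ 6 ∣ x.2)).card : ℤ) := by
    simp only [Finset.card_filter, Nat.cast_sum, Finset.mul_sum]
    rw [Finset.sum_comm]
    refine Finset.sum_congr rfl fun x hx => ?_
    have hle := Finset.le_sup (f := fun x : ℤ × ℤ => x.1.natAbs + x.2.natAbs) hx
    have hx0 : x ≠ 0 := Finset.ne_of_mem_erase hx
    have := moebius_ind x.1 x.2 (by
      by_contra hc
      push Not at hc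
      exact hx0 (Prod.ext hc.1 hc.2)) N (by omega)
    push_cast
    rw [← this]
    simp
  exact_mod_cast h

open Classical in
lemma count_M_bound (p : ℕ) (hp : p.Prime) (y : ℝ) (hy : 1 ≤ y) :
    |(((boxp p y).filter (fun x => CondM x.1 x.2)).card : ℝ) -
      4 * y ^ 10 * (((p : ℝ) ^ 8 - 1) / ((p : ℝ) ^ 10 - 1) * (1 / (riemannZeta 10).re))|
      ≤ 6 * y ^ 6 * (Real.pi ^ 2 / 6) := by
  obtain ⟨N0, hN0⟩ := count_M p y
  have hS := ((hasSum_mu_p p hp _ hasSum_mu).mul_left (4 * y ^ 10)).tendsto_sum_nat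
  refine le_of_tendsto ((hS.const_sub _).abs) ?_
  filter_upwards [Filter.eventually_ge_atTop N0] with N hN
  rw [hN0 N hN, ← Finset.sum_sub_distrib]
  refine (Finset.abs_sum_le_sum_abs _ _).trans ?_
  have hle : ∑ d ∈ Finset.range N, 6 * y ^ 6 * (1 / (d : ℝ) ^ 2) ≤ 6 * y ^ 6 * (Real.pi ^ 2 / 6) :=
    sum_le_hasSum _ (fun i _ => by positivity) (hasSum_zeta_two.mul_left _)
  refine le_trans (Finset.sum_le_sum fun d _ => ?_) hle
  rcases Nat.eq_zero_or_pos d with rfl | hd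
  · simp
  · have hb := Nd_bound p hp.pos y hy d hd
    have hmu : |(ArithmeticFunction.moebius d : ℝ)| ≤ 1 := by
      exact_mod_cast ArithmeticFunction.abs_moebius_le_one
    calc _ = |(ArithmeticFunction.moebius d : ℝ)| *
            |((((boxp p y).filter (fun x => (d : ℤ) ^ 4 ∣ x.1 ∧ (d : ℤ) ^ 6 ∣ x.2)).card : ℕ) : ℝ)
              - 4 * y ^ 10 / ((Nat.lcm p (d ^ 4) : ℝ) * (Nat.lcm p (d ^ 6) : ℝ))| := by
          rw [← abs_mul]; congr 1
          rw [mul_sub]; congr 1; ring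
      _ ≤ 1 * _ := by gcongr
      _ ≤ _ := by rw [one_mul]; exact hb

lemma cube_inj (a b : ℤ) (h : a ^ 3 = b ^ 3) : a = b :=
  (Odd.strictMono_pow (by decide : Odd 3)).injective h

lemma main_bound (p : ℕ) (hp : p.Prime) (y : ℝ) (hy : 1 ≤ y) :
    |({AB ∈ Efam (y ^ 12) | (p : ℤ) ∣ AB.1 ∧ (p : ℤ) ∣ AB.2}.ncard : ℝ) -
      4 * y ^ 10 * (((p : ℝ) ^ 8 - 1) / ((p : ℝ) ^ 10 - 1) * (1 / (riemannZeta 10).re))|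
      ≤ 6 * y ^ 6 * (Real.pi ^ 2 / 6) + 3 * y ^ 6 := by
  classical
  have hy0 : 0 < y := by linarith
  set C := (boxp p y).filter (fun x => CondM x.1 x.2) with hC
  have hM := count_M_bound p hp y hy
  have hset : {AB ∈ Efam (y ^ 12) | (p : ℤ) ∣ AB.1 ∧ (p : ℤ) ∣ AB.2}
      = ((C.filter (fun x => 4 * x.1 ^ 3 + 27 * x.2 ^ 2 ≠ 0) : Finset (ℤ × ℤ)) : Set (ℤ × ℤ)) := by
    ext ⟨A, B⟩
    have hH : ((max (|A| ^ 3) (B ^ 2) : ℤ) : ℝ) ≤ y ^ 12 ↔ |(A:ℝ)| ≤ y ^ 4 ∧ |(B:ℝ)| ≤ y ^ 6 := by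
      push_cast
      rw [max_le_iff]
      refine and_congr ?_ ?_
      · rw [show y ^ 12 = (y ^ 4) ^ 3 by ring]
        exact pow_le_pow_iff_left₀ (abs_nonneg _) (by positivity) (by norm_num)
      · rw [show y ^ 12 = (y ^ 6) ^ 2 by ring, ← sq_abs]
        exact pow_le_pow_iff_left₀ (abs_nonneg _) (by positivity) (by norm_num)
    have h0 : 4 * A ^ 3 + 27 * B ^ 2 ≠ 0 → (A, B) ≠ (0 : ℤ × ℤ) := by
      intro h h'
      rw [Prod.ext_iff] at h'
      simp at h'
      simp [h'.1, h'.2] at h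
    simp only [Efam, Set.mem_ofPred_eq, hC, boxp, Finset.coe_filter, Finset.mem_filter,
      Finset.mem_erase, Finset.mem_product, mem_symI, hH]
    tauto
  rw [hset, Set.ncard_coe_finset]
  have hadd := Finset.card_filter_add_card_filter_not (s := C) (fun x : ℤ × ℤ => 4 * x.1 ^ 3 + 27 * x.2 ^ 2 ≠ 0)
  have hbad : (C.filter (fun x : ℤ × ℤ => ¬ (4 * x.1 ^ 3 + 27 * x.2 ^ 2 ≠ 0))).card ≤ (symI (y ^ 6)).card := by
    refine Finset.card_le_card_of_injOn Prod.snd ?_ ?_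
    · intro x hx
      simp only [hC, boxp, Finset.coe_filter, Finset.mem_filter,
        Finset.mem_erase, Finset.mem_product, Set.mem_ofPred_eq] at hx
      exact hx.1.1.2.1.2
    · intro x hx z hz hxz
      simp only [Finset.coe_filter, Set.mem_ofPred_eq, not_not] at hx hz
      refine Prod.ext (cube_inj _ _ ?_) hxz
      have h1 := hx.2
      have h2 := hz.2
      rw [hxz] at h1
      linarith
  have hsym : ((symI (y ^ 6)).card : ℝ) ≤ 3 * y ^ 6 := by
    have := card_mult (y ^ 6) 1 one_pos (by positivity)
    simp only [Nat.cast_one, one_dvd, Finset.filter_true, div_one] at this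
    unfold symI
    rw [this]
    have := Int.floor_le (y ^ 6)
    have : 1 ≤ y ^ 6 := one_le_pow₀ hy
    linarith
  have hadd' : ((C.filter (fun x : ℤ × ℤ => 4 * x.1 ^ 3 + 27 * x.2 ^ 2 ≠ 0)).card : ℝ)
     + ((C.filter (fun x : ℤ × ℤ => ¬ (4 * x.1 ^ 3 + 27 * x.2 ^ 2 ≠ 0))).card : ℝ) = C.card := by
    exact_mod_cast hadd
  have hbad' : ((C.filter (fun x : ℤ × ℤ => ¬ (4 * x.1 ^ 3 + 27 * x.2 ^ 2 ≠ 0))).card : ℝ) ≤ (symI (y ^ 6)).card := by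
    exact_mod_cast hbad
  have hnn : (0:ℝ) ≤ ((C.filter (fun x : ℤ × ℤ => ¬ (4 * x.1 ^ 3 + 27 * x.2 ^ 2 ≠ 0))).card : ℝ) := Nat.cast_nonneg _
  have hy6 : 0 < y ^ 6 := by positivity
  rw [abs_le] at hM ⊢
  constructor <;> linarith [hM.1, hM.2]

theorem stmt_4 :
    ∃ K : ℝ, 0 < K ∧ ∀ (p : ℕ), p.Prime → 5 ≤ p → ∀ (X : ℝ), (p : ℝ) ^ 3 ≤ X →
      |({AB ∈ Efam X | (p : ℤ) ∣ AB.1 ∧ (p : ℤ) ∣ AB.2}.ncard : ℝ)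
          - (((p : ℝ) ^ 8 - 1) / ((p : ℝ) ^ 10 - 1)) * (4 / (riemannZeta 10).re)
            * X ^ ((5 : ℝ) / 6)|
        ≤ K * (p : ℝ) * X ^ ((1 : ℝ) / 2) := by
  refine ⟨6 * (Real.pi ^ 2 / 6) + 3, by positivity, ?_⟩
  intro p hp _ X hX
  have hp1 : (1:ℝ) ≤ p := by exact_mod_cast hp.one_lt.le
  have hX1 : 1 ≤ X := (one_le_pow₀ hp1).trans hX
  have hX0 : 0 ≤ X := by linarith
  set y : ℝ := X ^ ((1:ℝ) / 12) with hy
  have hy1 : 1 ≤ y := Real.one_le_rpow hX1 (by norm_num)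
  have hpw : ∀ k : ℕ, y ^ k = X ^ ((k : ℝ) / 12) := by
    intro k
    rw [hy, ← Real.rpow_mul_natCast hX0]
    congr 1; ring
  have h12 : y ^ 12 = X := by rw [hpw]; norm_num
  have h10 : y ^ 10 = X ^ ((5:ℝ) / 6) := by rw [hpw]; norm_num
  have h6 : y ^ 6 = X ^ ((1:ℝ) / 2) := by rw [hpw]; norm_num
  have := main_bound p hp y hy1
  rw [h12] at this
  rw [← h10, ← h6]
  have hy6 : 0 < y ^ 6 := by positivity
  have e : (((p : ℝ) ^ 8 - 1) / ((p : ℝ) ^ 10 - 1)) * (4 / (riemannZeta 10).re) * y ^ 10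
     = 4 * y ^ 10 * (((p : ℝ) ^ 8 - 1) / ((p : ℝ) ^ 10 - 1) * (1 / (riemannZeta 10).re)) := by ring
  rw [e]
  refine this.trans ?_
  have : (6 * (Real.pi ^ 2 / 6) + 3) * 1 * y ^ 6 ≤ (6 * (Real.pi ^ 2 / 6) + 3) * (p:ℝ) * y ^ 6 := by gcongr
  linarith
end

section
/- There is an absolute constant K such that for every prime p ≥ 5 and every real X with p³ ≤ X, the number of pairs (A,B) ∈ E(X) with p ∤ 4A³+27B² (i.e. the elliptic curves y² = x³+Ax+B in the family with good reduction at p) differs from ((p²−p)/p²)·(p^{10}/(p^{10}−1))·(4/ζ(10))·X^{5/6} by at most K·p·X^{1/2}, where ζ is the Riemann zeta function. -/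
lemma cardS (p : ℕ) [Fact p.Prime] (hp5 : 5 ≤ p) :
    (Finset.univ.filter (fun rs : ZMod p × ZMod p => 4 * rs.1 ^ 3 + 27 * rs.2 ^ 2 = 0)).card = p := by
  have key : ∀ n : ℕ, 0 < n → n < 5 → (n : ZMod p) ≠ 0 := by
    intro n h0 h5 h
    rw [ZMod.natCast_eq_zero_iff] at h
    have := Nat.le_of_dvd h0 h
    omega
  have h2 : (2 : ZMod p) ≠ 0 := by exact_mod_cast key 2 (by norm_num) (by norm_num)
  have h3 : (3 : ZMod p) ≠ 0 := by exact_mod_cast key 3 (by norm_num) (by norm_num)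
  conv_rhs => rw [← ZMod.card p, ← Finset.card_univ]
  refine Finset.card_nbij' (fun rs => -3 * rs.2 / (2 * rs.1)) (fun t => (-3 * t ^ 2, 2 * t ^ 3)) ?_ ?_ ?_ ?_
  · intro _ _; simp
  · intro t _
    simp only [Finset.coe_filter, Finset.mem_univ, true_and, Set.mem_ofPred_eq]
    ring
  · rintro ⟨r, s⟩ h
    simp only [Finset.coe_filter, Finset.mem_univ, true_and, Set.mem_ofPred_eq] at h
    by_cases hr : r = 0
    · subst hr
      have : s = 0 := by
        have h27 : (27 : ZMod p) ≠ 0 := by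
          have : (27 : ZMod p) = 3 ^ 3 := by norm_num
          rw [this]; exact pow_ne_zero _ h3
        simpa [h27] using h
      simp [this]
    · simp only [Prod.mk.injEq]
      constructor
      · field_simp
        linear_combination (-1) * h
      · field_simp
        linear_combination (-s) * h
  · intro t _
    by_cases ht : t = 0
    · simp [ht]
    · simp only
      field_simp

lemma cnt (p : ℕ) [Fact p.Prime] (U : ℝ) (hU : 0 ≤ U) (r : ZMod p) :
    |(((Finset.Icc (-⌊U⌋) ⌊U⌋).filter (fun a : ℤ => (a : ZMod p) = r)).card : ℝ) - 2 * U / p| ≤ 2 := by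
  have hp : 0 < (p:ℤ) := by exact_mod_cast (Fact.out : p.Prime).pos
  have hpr : (1:ℝ) ≤ (p:ℝ) := by exact_mod_cast (Fact.out : p.Prime).one_lt.le
  have h1 : (Finset.Icc (-⌊U⌋) ⌊U⌋).filter (fun a : ℤ => (a : ZMod p) = r)
      = (Finset.Ioc (-⌊U⌋ - 1) ⌊U⌋).filter (fun a : ℤ => a ≡ (r.val : ℤ) [ZMOD p]) := by
    ext a
    simp only [Finset.mem_filter, Finset.mem_Icc, Finset.mem_Ioc]
    rw [← ZMod.intCast_eq_intCast_iff]
    have : (((r.val : ℤ)) : ZMod p) = r := by simp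
    rw [this]
    constructor <;> rintro ⟨⟨_, _⟩, h⟩ <;> exact ⟨⟨by omega, by omega⟩, h⟩
  rw [h1]
  have h2 := Int.Ioc_filter_modEq_card (-⌊U⌋ - 1) ⌊U⌋ hp (r.val : ℤ)
  have hm : (0:ℤ) ≤ ⌊U⌋ := Int.floor_nonneg.mpr hU
  set c := ((Finset.Ioc (-⌊U⌋ - 1) ⌊U⌋).filter (fun a : ℤ => a ≡ (r.val : ℤ) [ZMOD p])).card with hc
  have hpq : (0:ℚ) < ((p:ℤ):ℚ) := by exact_mod_cast hp
  have hA : (c:ℤ) * p ≤ 2 * ⌊U⌋ + 1 + p ∧ 2 * ⌊U⌋ + 1 - p ≤ (c:ℤ) * p := by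
    have hmq : (0:ℚ) ≤ (⌊U⌋ : ℚ) := by exact_mod_cast hm
    rw [max_eq_left] at h2
    · have e1 := Int.floor_le (((⌊U⌋:ℤ):ℚ) - ((r.val:ℤ):ℚ)) 
      have a1 := Int.floor_le ((((⌊U⌋:ℤ):ℚ) - ((r.val:ℤ):ℚ)) / ((p:ℤ):ℚ))
      have a2 := Int.lt_floor_add_one ((((⌊U⌋:ℤ):ℚ) - ((r.val:ℤ):ℚ)) / ((p:ℤ):ℚ))
      have b1 := Int.floor_le ((((-⌊U⌋-1:ℤ):ℚ) - ((r.val:ℤ):ℚ)) / ((p:ℤ):ℚ))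
      have b2 := Int.lt_floor_add_one ((((-⌊U⌋-1:ℤ):ℚ) - ((r.val:ℤ):ℚ)) / ((p:ℤ):ℚ))
      rw [le_div_iff₀ hpq] at a1 b1
      rw [div_lt_iff₀ hpq] at a2 b2
      have e : ((c:ℤ):ℚ) = (⌊(((⌊U⌋:ℤ):ℚ) - ((r.val:ℤ):ℚ)) / ((p:ℤ):ℚ)⌋:ℚ) - (⌊(((-⌊U⌋-1:ℤ):ℚ) - ((r.val:ℤ):ℚ)) / ((p:ℤ):ℚ)⌋ : ℚ) := by
        rw [← Int.cast_sub]
        exact congrArg _ h2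
      have q : ((c:ℤ):ℚ) * (p:ℤ) ≤ 2 * ⌊U⌋ + 1 + (p:ℤ) ∧ 2 * ⌊U⌋ + 1 - (p:ℤ) ≤ ((c:ℤ):ℚ) * (p:ℤ) := by
        rw [e]
        push_cast at *
        constructor <;> nlinarith
      exact_mod_cast q
    · rw [sub_nonneg]
      apply Int.floor_le_floor
      apply div_le_div_of_nonneg_right _ hpq.le
      push_cast
      linarith
  have hB : (c:ℝ) * p ≤ 2 * ⌊U⌋ + 1 + p ∧ 2 * ⌊U⌋ + 1 - p ≤ (c:ℝ) * p := by exact_mod_cast hA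
  have f1 := Int.floor_le U
  have f2 := Int.lt_floor_add_one U
  have hp0 : (0:ℝ) < p := by linarith
  have hd : 2 * U / p * p = 2 * U := div_mul_cancel₀ _ hp0.ne'
  rw [abs_le]
  constructor
  · by_contra! h
    have := mul_lt_mul_of_pos_right h hp0
    rw [sub_mul, hd] at this
    linarith
  · by_contra! h
    have := mul_lt_mul_of_pos_right h hp0
    rw [sub_mul, hd] at this
    linarith

/-- The box of pairs with `|a| ≤ U`, `|b| ≤ V`. -/
noncomputable def bx (U V : ℝ) : Finset (ℤ × ℤ) :=
  Finset.Icc (-⌊U⌋) ⌊U⌋ ×ˢ Finset.Icc (-⌊V⌋) ⌊V⌋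

lemma mem_bx (U V : ℝ) (ab : ℤ × ℤ) :
    ab ∈ bx U V ↔ |(ab.1 : ℝ)| ≤ U ∧ |(ab.2 : ℝ)| ≤ V := by
  simp only [bx, Finset.mem_product, Finset.mem_Icc]
  rw [← abs_le, ← abs_le, Int.le_floor, Int.le_floor]
  push_cast
  rfl

/-- Pairs in the box with good reduction at `p`. -/
noncomputable def gd (p : ℕ) (U V : ℝ) : Finset (ℤ × ℤ) :=
  (bx U V).filter (fun ab => ¬ (p : ℤ) ∣ 4 * ab.1 ^ 3 + 27 * ab.2 ^ 2)

lemma bad_count (p : ℕ) [Fact p.Prime] (U V : ℝ) :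
    ((bx U V).filter (fun ab => (p : ℤ) ∣ 4 * ab.1 ^ 3 + 27 * ab.2 ^ 2)).card =
    ∑ rs ∈ Finset.univ.filter (fun rs : ZMod p × ZMod p => 4 * rs.1 ^ 3 + 27 * rs.2 ^ 2 = 0),
      ((Finset.Icc (-⌊U⌋) ⌊U⌋).filter (fun a : ℤ => (a : ZMod p) = rs.1)).card *
      ((Finset.Icc (-⌊V⌋) ⌊V⌋).filter (fun a : ℤ => (a : ZMod p) = rs.2)).card := by
  rw [Finset.card_eq_sum_card_fiberwise (f := fun ab : ℤ × ℤ => ((ab.1 : ZMod p), (ab.2 : ZMod p)))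
    (t := Finset.univ.filter (fun rs : ZMod p × ZMod p => 4 * rs.1 ^ 3 + 27 * rs.2 ^ 2 = 0))]
  · apply Finset.sum_congr rfl
    rintro ⟨r, s⟩ hrs
    rw [← Finset.card_product]
    congr 1
    ext ⟨a, b⟩
    simp only [Finset.mem_filter, Finset.mem_univ, true_and, Finset.mem_product, bx, Prod.mk.injEq] at hrs ⊢
    constructor
    · rintro ⟨⟨⟨h1, h2⟩, -⟩, h3, h4⟩
      exact ⟨⟨h1, h3⟩, h2, h4⟩
    · rintro ⟨⟨h1, h3⟩, h2, h4⟩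
      refine ⟨⟨⟨h1, h2⟩, ?_⟩, h3, h4⟩
      rw [← ZMod.intCast_zmod_eq_zero_iff_dvd]
      push_cast
      rw [h3, h4, hrs]
  · rintro ⟨a, b⟩ h
    simp only [Finset.coe_filter, Set.mem_ofPred_eq, Finset.mem_univ, true_and] at h ⊢
    have := (ZMod.intCast_zmod_eq_zero_iff_dvd _ _).mpr h.2
    push_cast at this
    exact this

lemma card_Icc_near (U : ℝ) (hU : 0 ≤ U) :
    |((Finset.Icc (-⌊U⌋) ⌊U⌋).card : ℝ) - 2 * U| ≤ 1 := by
  have hm : (0:ℤ) ≤ ⌊U⌋ := Int.floor_nonneg.mpr hU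
  have : ((Finset.Icc (-⌊U⌋) ⌊U⌋).card : ℤ) = 2 * ⌊U⌋ + 1 := by
    rw [Int.card_Icc, Int.toNat_of_nonneg (by omega)]; ring
  have h : ((Finset.Icc (-⌊U⌋) ⌊U⌋).card : ℝ) = 2 * ⌊U⌋ + 1 := by exact_mod_cast this
  rw [h, abs_le]
  have f1 := Int.floor_le U
  have f2 := Int.lt_floor_add_one U
  constructor <;> linarith

lemma prod_near (x y a b e : ℝ) (ha : 0 ≤ a) (hb : 0 ≤ b) (he : 0 ≤ e) (hx : |x - a| ≤ e) (hy : |y - b| ≤ e) :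
    |x * y - a * b| ≤ e * (a + b + e) := by
  have : x * y - a * b = (x - a) * (y - b) + a * (y - b) + (x - a) * b := by ring
  rw [this]
  calc _ ≤ |(x - a) * (y - b)| + |a * (y - b)| + |(x - a) * b| := abs_add_three _ _ _
    _ = |x - a| * |y - b| + a * |y - b| + |x - a| * b := by
      rw [abs_mul, abs_mul, abs_mul, abs_of_nonneg ha, abs_of_nonneg hb]
    _ ≤ e * e + a * e + e * b := by gcongr
    _ = _ := by ring

lemma good_count (p : ℕ) [Fact p.Prime] (hp5 : 5 ≤ p) (U V : ℝ) (hU : 0 ≤ U) (hV : 0 ≤ V) :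
    |((gd p U V).card : ℝ) - (1 - 1 / p) * (4 * U * V)| ≤ 10 * (U + V + 1) * p := by
  have hp1 : (1:ℝ) ≤ p := by exact_mod_cast (by omega : 1 ≤ p)
  have hp0 : (0:ℝ) < p := by linarith
  have htot : ((gd p U V).card : ℝ) = ((bx U V).card : ℝ) -
      (((bx U V).filter (fun ab => (p : ℤ) ∣ 4 * ab.1 ^ 3 + 27 * ab.2 ^ 2)).card : ℝ) := by
    rw [gd, eq_sub_iff_add_eq, add_comm]
    exact_mod_cast Finset.card_filter_add_card_filter_not (s := bx U V) _
  have hbx : |((bx U V).card : ℝ) - 4 * U * V| ≤ 2 * U + 2 * V + 1 := by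
    rw [bx, Finset.card_product]
    push_cast
    have := prod_near _ _ (2 * U) (2 * V) 1 (by positivity) (by positivity) (by norm_num) (card_Icc_near U hU) (card_Icc_near V hV)
    convert this using 2 <;> ring
  have hbad : |(((bx U V).filter (fun ab => (p : ℤ) ∣ 4 * ab.1 ^ 3 + 27 * ab.2 ^ 2)).card : ℝ)
      - 1 / p * (4 * U * V)| ≤ 4 * U + 4 * V + 4 * p := by
    rw [bad_count]
    push_cast
    set S := Finset.univ.filter (fun rs : ZMod p × ZMod p => 4 * rs.1 ^ 3 + 27 * rs.2 ^ 2 = 0) with hS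
    have hSc : (S.card : ℝ) = p := by exact_mod_cast cardS p hp5
    have e1 : 1 / (p:ℝ) * (4 * U * V) = ∑ rs ∈ S, (2 * U / p) * (2 * V / p) := by
      rw [Finset.sum_const, nsmul_eq_mul, hSc]; field_simp; ring
    rw [e1, ← Finset.sum_sub_distrib]
    calc _ ≤ ∑ rs ∈ S, 2 * (2 * U / p + 2 * V / p + 2) := by
          refine (Finset.abs_sum_le_sum_abs _ _).trans (Finset.sum_le_sum fun rs _ => ?_)
          exact prod_near _ _ _ _ 2 (by positivity) (by positivity) (by norm_num) (cnt p U hU _) (cnt p V hV _)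
      _ = _ := by rw [Finset.sum_const, nsmul_eq_mul, hSc]; field_simp; ring
  rw [htot]
  rw [abs_le] at hbx hbad ⊢
  have hUp : U ≤ U * p := le_mul_of_one_le_right hU hp1
  have hVp : V ≤ V * p := le_mul_of_one_le_right hV hp1
  constructor <;> nlinarith

lemma good_count_t (p : ℕ) [Fact p.Prime] (hp5 : 5 ≤ p) (t : ℝ) (ht : 0 ≤ t) :
    |((gd p (t ^ 2) (t ^ 3)).card : ℝ) - 4 * (1 - 1 / p) * t ^ 5| ≤ 30 * p * t ^ 3 := by
  have hp1 : (1:ℝ) ≤ p := by exact_mod_cast (by omega : 1 ≤ p)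
  have hp0 : (0:ℝ) < p := by linarith
  rcases le_or_gt 1 t with h | h
  · have := good_count p hp5 (t ^ 2) (t ^ 3) (by positivity) (by positivity)
    have e : 4 * (1 - 1 / (p:ℝ)) * t ^ 5 = (1 - 1 / p) * (4 * t ^ 2 * t ^ 3) := by ring
    rw [e]
    refine this.trans ?_
    have h3 : t ^ 2 ≤ t ^ 3 := pow_le_pow_right₀ h (by norm_num)
    have h1 : 1 ≤ t ^ 3 := one_le_pow₀ h
    nlinarith
  · have : gd p (t ^ 2) (t ^ 3) = ∅ := by
      rw [Finset.eq_empty_iff_forall_notMem]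
      rintro ⟨a, b⟩ hab
      simp only [gd, Finset.mem_filter, mem_bx] at hab
      obtain ⟨⟨ha, hb⟩, hn⟩ := hab
      have ha1 : |(a:ℝ)| < 1 := ha.trans_lt (pow_lt_one₀ ht h (by norm_num))
      have hb1 : |(b:ℝ)| < 1 := hb.trans_lt (pow_lt_one₀ ht h (by norm_num))
      have ha2 : |a| < 1 := by exact_mod_cast ha1
      have hb2 : |b| < 1 := by exact_mod_cast hb1
      rw [Int.abs_lt_one_iff] at ha2 hb2
      simp [ha2, hb2] at hn
    rw [this]
    have h1 : 1 / (p:ℝ) ≤ 1 := by rw [div_le_one hp0]; exact hp1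
    have h0 : 0 ≤ 1 / (p:ℝ) := by positivity
    have h53 : t ^ 5 ≤ t ^ 3 := pow_le_pow_of_le_one ht h.le (by norm_num)
    have h5 : 0 ≤ t ^ 5 := by positivity
    have h3 : 0 ≤ t ^ 3 := by positivity
    simp only [Finset.card_empty, Nat.cast_zero, zero_sub, abs_neg]
    rw [abs_of_nonneg (mul_nonneg (by linarith) h5)]
    nlinarith

open ArithmeticFunction in
lemma moebius_ind_s12 (A B : ℤ) (h0 : A ≠ 0 ∨ B ≠ 0) (M : ℕ)
    (hM : |A| ≤ M ∧ |B| ≤ M) [Decidable (CondM A B)] :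
    ∑ d ∈ (Finset.Icc 1 M).filter (fun d : ℕ => (d : ℤ) ^ 4 ∣ A ∧ (d : ℤ) ^ 6 ∣ B), moebius d
      = if CondM A B then 1 else 0 := by
  set S := (Finset.Icc 1 M).filter (fun d : ℕ => (d : ℤ) ^ 4 ∣ A ∧ (d : ℤ) ^ 6 ∣ B) with hS
  have hnat : ∀ d : ℕ, ((d : ℤ) ^ 4 ∣ A ∧ (d : ℤ) ^ 6 ∣ B) ↔ (d ^ 4 ∣ A.natAbs ∧ d ^ 6 ∣ B.natAbs) := by
    intro d
    rw [← Int.natCast_dvd, ← Int.natCast_dvd]; push_cast; rfl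
  have hbd : ∀ d : ℕ, ((d : ℤ) ^ 4 ∣ A ∧ (d : ℤ) ^ 6 ∣ B) → d ∈ S := by
    intro d hd
    rw [hS, Finset.mem_filter]
    refine ⟨?_, hd⟩
    have hd' := (hnat d).1 hd
    rw [Finset.mem_Icc]
    rcases h0 with h | h
    · have hpos : 0 < A.natAbs := Int.natAbs_pos.mpr h
      have hdpos : 0 < d := by
        rcases Nat.eq_zero_or_pos d with rfl | h'
        · simp at hd'; omega
        · exact h'
      have := Nat.le_of_dvd hpos hd'.1
      have h2 : d ≤ d ^ 4 := Nat.le_self_pow (by norm_num) d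
      have := hM.1
      rw [Int.abs_eq_natAbs] at this
      omega
    · have hpos : 0 < B.natAbs := Int.natAbs_pos.mpr h
      have hdpos : 0 < d := by
        rcases Nat.eq_zero_or_pos d with rfl | h'
        · simp at hd'; omega
        · exact h'
      have := Nat.le_of_dvd hpos hd'.2
      have h2 : d ≤ d ^ 6 := Nat.le_self_pow (by norm_num) d
      have := hM.2
      rw [Int.abs_eq_natAbs] at this
      omega
  have h1S : 1 ∈ S := hbd 1 (by simp)
  obtain ⟨D, hDS, hDmax⟩ := Finset.exists_max_image S id ⟨1, h1S⟩
  have hDpos : 0 < D := by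
    rw [hS, Finset.mem_filter, Finset.mem_Icc] at hDS; omega
  have hDd := (hnat D).1 (Finset.mem_filter.mp hDS).2
  have hSD : S = D.divisors := by
    ext d
    rw [Nat.mem_divisors]
    constructor
    · intro hd
      refine ⟨?_, hDpos.ne'⟩
      have hdd := (hnat d).1 (Finset.mem_filter.mp hd).2
      have hl : Nat.lcm d D ∈ S := by
        apply hbd
        rw [hnat, ← Nat.pow_lcm_pow, ← Nat.pow_lcm_pow]
        exact ⟨Nat.lcm_dvd hdd.1 hDd.1, Nat.lcm_dvd hdd.2 hDd.2⟩
      have hle : Nat.lcm d D ≤ D := hDmax _ hl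
      have : Nat.lcm d D = D := le_antisymm hle (Nat.le_of_dvd (by
        have := (Finset.mem_Icc.mp (Finset.mem_filter.mp hl).1).1; omega) (Nat.dvd_lcm_right d D))
      rw [← this]; exact Nat.dvd_lcm_left d D
    · rintro ⟨hd, -⟩
      apply hbd
      rw [hnat]
      exact ⟨(pow_dvd_pow_of_dvd hd 4).trans hDd.1, (pow_dvd_pow_of_dvd hd 6).trans hDd.2⟩
  have hmu : ∑ d ∈ D.divisors, moebius d = if D = 1 then 1 else 0 := by
    rw [← coe_zeta_mul_apply, coe_zeta_mul_moebius, one_apply]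
  rw [hSD, hmu]
  have : D = 1 ↔ CondM A B := by
    constructor
    · intro hD q hq h4 h6
      have : q ∈ S := hbd q ⟨h4, h6⟩
      rw [hSD, hD] at this
      simp at this
      exact hq.one_lt.ne' this
    · intro h
      by_contra hD
      obtain ⟨q, hq, hqD⟩ := Nat.exists_prime_and_dvd hD
      have : q ∈ S := by rw [hSD, Nat.mem_divisors]; exact ⟨hqD, hDpos.ne'⟩
      have := (Finset.mem_filter.mp this).2
      exact h q hq this.1 this.2
  simp only [this]

lemma scale (p : ℕ) (hp : p.Prime) (t : ℝ) (d : ℕ) (hd : 0 < d) (hpd : ¬ p ∣ d) :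
    ((gd p (t ^ 2) (t ^ 3)).filter (fun ab => (d : ℤ) ^ 4 ∣ ab.1 ∧ (d : ℤ) ^ 6 ∣ ab.2)).card
      = (gd p ((t / d ^ 2) ^ 2) ((t / d ^ 2) ^ 3)).card := by
  have hdr : (0:ℝ) < d := by exact_mod_cast hd
  have hdz : (d:ℤ) ≠ 0 := by exact_mod_cast hd.ne'
  symm
  apply Finset.card_bij (fun ab _ => ((d:ℤ) ^ 4 * ab.1, (d:ℤ) ^ 6 * ab.2))
  · rintro ⟨a, b⟩ h
    simp only [gd, Finset.mem_filter, mem_bx] at h ⊢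
    obtain ⟨⟨ha, hb⟩, hn⟩ := h
    refine ⟨⟨⟨?_, ?_⟩, ?_⟩, dvd_mul_right _ _, dvd_mul_right _ _⟩
    · push_cast
      rw [abs_mul, abs_of_pos (by positivity)]
      rw [div_pow, le_div_iff₀ (by positivity)] at ha
      linarith [show ((d:ℝ)^2)^2 = d^4 by ring]
    · push_cast
      rw [abs_mul, abs_of_pos (by positivity)]
      rw [div_pow, le_div_iff₀ (by positivity)] at hb
      linarith [show ((d:ℝ)^2)^3 = d^6 by ring]
    · intro hdvd
      have e : 4 * ((d:ℤ) ^ 4 * a) ^ 3 + 27 * ((d:ℤ) ^ 6 * b) ^ 2 = (d:ℤ) ^ 12 * (4 * a ^ 3 + 27 * b ^ 2) := by ring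
      rw [e] at hdvd
      rcases (Nat.prime_iff_prime_int.mp hp).dvd_or_dvd hdvd with h | h
      · exact hpd (by exact_mod_cast (Nat.prime_iff_prime_int.mp hp).dvd_of_dvd_pow h)
      · exact hn h
  · rintro ⟨a, b⟩ _ ⟨a', b'⟩ _ h
    simpa [hd.ne'] using h
  · rintro ⟨a, b⟩ h
    simp only [gd, Finset.mem_filter, mem_bx] at h
    obtain ⟨⟨⟨ha, hb⟩, hn⟩, ⟨a', rfl⟩, ⟨b', rfl⟩⟩ := h
    refine ⟨(a', b'), ?_, rfl⟩
    simp only [gd, Finset.mem_filter, mem_bx]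
    push_cast at ha hb
    rw [abs_mul, abs_of_pos (by positivity)] at ha hb
    refine ⟨⟨?_, ?_⟩, ?_⟩
    · rw [div_pow, le_div_iff₀ (by positivity)]
      linarith [show ((d:ℝ)^2)^2 = d^4 by ring]
    · rw [div_pow, le_div_iff₀ (by positivity)]
      linarith [show ((d:ℝ)^2)^3 = d^6 by ring]
    · intro hdvd
      apply hn
      have e : 4 * ((d:ℤ) ^ 4 * a') ^ 3 + 27 * ((d:ℤ) ^ 6 * b') ^ 2 = (d:ℤ) ^ 12 * (4 * a' ^ 3 + 27 * b' ^ 2) := by ring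
      rw [e]; exact hdvd.mul_left _

lemma scale_zero (p : ℕ) (t : ℝ) (d : ℕ) (hpd : p ∣ d) :
    ((gd p (t ^ 2) (t ^ 3)).filter (fun ab => (d : ℤ) ^ 4 ∣ ab.1 ∧ (d : ℤ) ^ 6 ∣ ab.2)).card = 0 := by
  rw [Finset.card_eq_zero, Finset.eq_empty_iff_forall_notMem]
  rintro ⟨a, b⟩ h
  simp only [gd, Finset.mem_filter, mem_bx] at h
  obtain ⟨⟨-, hn⟩, h4, h6⟩ := h
  have hpd' : (p:ℤ) ∣ d := by exact_mod_cast hpd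
  have ha : (p:ℤ) ∣ a := (hpd'.trans (dvd_pow_self _ (by norm_num))).trans h4
  have hb : (p:ℤ) ∣ b := (hpd'.trans (dvd_pow_self _ (by norm_num))).trans h6
  exact hn (dvd_add ((dvd_pow ha (by norm_num)).mul_left _) ((dvd_pow hb (by norm_num)).mul_left _))

/-- The Möbius coefficient away from `p`. -/
noncomputable def cf (p d : ℕ) : ℝ := if p ∣ d then 0 else (ArithmeticFunction.moebius d : ℝ)

lemma cf_zero (p : ℕ) : cf p 0 = 0 := by simp [cf]

lemma cf_abs (p d : ℕ) : |cf p d| ≤ 1 := by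
  unfold cf
  split_ifs
  · simp
  · exact_mod_cast ArithmeticFunction.abs_moebius_le_one

lemma count_eq (p : ℕ) (hp : p.Prime) (t : ℝ) (ht : 0 ≤ t) :
    HasSum (fun d : ℕ => cf p d * ((gd p ((t / d ^ 2) ^ 2) ((t / d ^ 2) ^ 3)).card : ℝ))
      (({AB ∈ Efam (t ^ 6) | ¬ (p : ℤ) ∣ (4 * AB.1 ^ 3 + 27 * AB.2 ^ 2)}.ncard : ℝ)) := by
  classical
  have hset : {AB ∈ Efam (t ^ 6) | ¬ (p : ℤ) ∣ (4 * AB.1 ^ 3 + 27 * AB.2 ^ 2)}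
      = (((gd p (t ^ 2) (t ^ 3)).filter (fun ab => CondM ab.1 ab.2) : Finset (ℤ × ℤ)) : Set (ℤ × ℤ)) := by
    ext ⟨a, b⟩
    simp only [Efam, gd, Finset.coe_filter, Finset.mem_filter, mem_bx, Set.mem_ofPred_eq]
    have h1 : ((max (|a| ^ 3) (b ^ 2) : ℤ) : ℝ) ≤ t ^ 6 ↔ |(a:ℝ)| ≤ t ^ 2 ∧ |(b:ℝ)| ≤ t ^ 3 := by
      push_cast
      rw [max_le_iff]
      apply and_congr
      · rw [show t ^ 6 = (t ^ 2) ^ 3 by ring]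
        exact pow_le_pow_iff_left₀ (abs_nonneg _) (by positivity) (by norm_num)
      · rw [show t ^ 6 = (t ^ 3) ^ 2 by ring, ← sq_abs]
        exact pow_le_pow_iff_left₀ (abs_nonneg _) (by positivity) (by norm_num)
    rw [h1]
    constructor
    · rintro ⟨⟨_, h2, h3⟩, h4⟩
      exact ⟨⟨h2, h4⟩, h3⟩
    · rintro ⟨⟨h2, h4⟩, h3⟩
      exact ⟨⟨fun h => h4 (by rw [h]; exact dvd_zero _), h2, h3⟩, h4⟩
  rw [hset, Set.ncard_coe_finset]
  obtain ⟨M, hM⟩ := exists_nat_ge (max (t ^ 2) (t ^ 3))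
  have hM2 : t ^ 2 ≤ M := (le_max_left _ _).trans hM
  have hM3 : t ^ 3 ≤ M := (le_max_right _ _).trans hM
  have key : ∀ d : ℕ, 0 < d → cf p d * ((gd p ((t / d ^ 2) ^ 2) ((t / d ^ 2) ^ 3)).card : ℝ)
      = (ArithmeticFunction.moebius d : ℝ) * ((gd p (t ^ 2) (t ^ 3)).filter (fun ab => (d : ℤ) ^ 4 ∣ ab.1 ∧ (d : ℤ) ^ 6 ∣ ab.2)).card := by
    intro d hd
    unfold cf
    split_ifs with h
    · rw [scale_zero p t d h]; simp
    · rw [scale p hp t d hd h]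
  have hne : ∀ ab ∈ gd p (t ^ 2) (t ^ 3), (ab.1 ≠ 0 ∨ ab.2 ≠ 0) ∧ |ab.1| ≤ M ∧ |ab.2| ≤ M := by
    rintro ⟨a, b⟩ h
    simp only [gd, Finset.mem_filter, mem_bx] at h
    obtain ⟨⟨ha, hb⟩, hn⟩ := h
    refine ⟨?_, ?_, ?_⟩
    · by_contra! hc
      apply hn
      simp only at hc
      simp [hc.1, hc.2]
    · have := ha.trans hM2
      simp only
      exact_mod_cast this
    · have := hb.trans hM3
      simp only
      exact_mod_cast this
  have hfin : ((((gd p (t ^ 2) (t ^ 3)).filter (fun ab => CondM ab.1 ab.2)).card : ℕ) : ℝ)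
      = ∑ d ∈ Finset.Icc 1 M, cf p d * ((gd p ((t / d ^ 2) ^ 2) ((t / d ^ 2) ^ 3)).card : ℝ) := by
    have hi : ((((gd p (t ^ 2) (t ^ 3)).filter (fun ab => CondM ab.1 ab.2)).card : ℕ) : ℤ)
      = ∑ d ∈ Finset.Icc 1 M, ArithmeticFunction.moebius d * (((gd p (t ^ 2) (t ^ 3)).filter (fun ab => (d : ℤ) ^ 4 ∣ ab.1 ∧ (d : ℤ) ^ 6 ∣ ab.2)).card : ℤ) := by
      rw [Finset.card_filter]
      push_cast
      rw [Finset.sum_congr rfl (fun ab hab => (moebius_ind_s12 ab.1 ab.2 (hne ab hab).1 M (hne ab hab).2).symm)]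
      simp only [Finset.sum_filter]
      rw [Finset.sum_comm]
      apply Finset.sum_congr rfl
      intro d _
      rw [Finset.card_filter]
      push_cast
      rw [Finset.mul_sum]
      apply Finset.sum_congr rfl
      intro ab _
      split_ifs <;> simp
    have hr := congrArg (fun z : ℤ => (z : ℝ)) hi
    push_cast at hr
    rw [hr]
    apply Finset.sum_congr rfl
    intro d hd
    rw [key d (Finset.mem_Icc.mp hd).1]
  rw [hfin]
  apply hasSum_sum_of_ne_finset_zero
  intro d hd
  rcases Nat.eq_zero_or_pos d with rfl | hpos
  · simp [cf_zero]
  rw [key d hpos]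
  have : (gd p (t ^ 2) (t ^ 3)).filter (fun ab => (d : ℤ) ^ 4 ∣ ab.1 ∧ (d : ℤ) ^ 6 ∣ ab.2) = ∅ := by
    rw [Finset.eq_empty_iff_forall_notMem]
    rintro ⟨a, b⟩ h
    rw [Finset.mem_filter] at h
    obtain ⟨hg, h4, h6⟩ := h
    obtain ⟨h0, hA, hB⟩ := hne _ hg
    simp only at h0 hA hB h4 h6
    have hd' : M < d := by
      rw [Finset.mem_Icc] at hd; omega
    have hd1 : (d:ℤ) ≤ (d:ℤ) ^ 4 := by exact_mod_cast Nat.le_self_pow (by norm_num) d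
    have hd2 : (d:ℤ) ≤ (d:ℤ) ^ 6 := by exact_mod_cast Nat.le_self_pow (by norm_num) d
    rcases h0 with h | h
    · have := Int.le_of_dvd (abs_pos.mpr h) ((dvd_abs _ _).mpr h4)
      omega
    · have := Int.le_of_dvd (abs_pos.mpr h) ((dvd_abs _ _).mpr h6)
      omega
  rw [this]; simp

lemma zeta_re : ((riemannZeta 10).re : ℂ) = riemannZeta 10 ∧ 0 < (riemannZeta 10).re := by
  have h := zeta_nat_eq_tsum_of_gt_one (k := 10) (by norm_num)
  have e : riemannZeta 10 = ((∑' n : ℕ, 1 / (n:ℝ) ^ 10 : ℝ) : ℂ) := by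
    rw [Complex.ofReal_tsum]
    push_cast
    exact_mod_cast h
  rw [e]
  refine ⟨by simp, ?_⟩
  rw [Complex.ofReal_re]
  have hs : Summable (fun n : ℕ => 1 / (n:ℝ) ^ 10) := Real.summable_one_div_nat_pow.mpr (by norm_num)
  exact hs.tsum_pos (fun n => by positivity) 1 (by norm_num)

lemma cf_sum (p : ℕ) (hp : p.Prime) :
    HasSum (fun d : ℕ => cf p d * (1 / (d:ℝ) ^ 10))
      (((p : ℝ) ^ 10 / ((p : ℝ) ^ 10 - 1)) * (1 / (riemannZeta 10).re)) := by
  have : NeZero p := ⟨hp.ne_zero⟩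
  have hs : Summable (fun d : ℕ => cf p d * (1 / (d:ℝ) ^ 10)) := by
    refine Summable.of_norm_bounded (g := fun n : ℕ => 1 / (n:ℝ) ^ 10)
      (Real.summable_one_div_nat_pow.mpr (by norm_num)) (fun d => ?_)
    rw [Real.norm_eq_abs, abs_mul, abs_of_nonneg (by positivity : 0 ≤ 1 / (d:ℝ) ^ 10)]
    exact mul_le_of_le_one_left (by positivity) (cf_abs p d)
  have h10 : (1:ℝ) < (10 : ℂ).re := by norm_num
  have h1 := DirichletCharacter.LSeries.mul_mu_eq_one (1 : DirichletCharacter ℂ p) h10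
  rw [← DirichletCharacter.LFunction_eq_LSeries _ h10] at h1
  have h2 := DirichletCharacter.LFunctionTrivChar_eq_mul_riemannZeta (N := p) (s := 10) (by norm_num)
  rw [DirichletCharacter.LFunctionTrivChar] at h2
  rw [h2, hp.primeFactors, Finset.prod_singleton] at h1
  have h3 : LSeries ((fun n : ℕ => (1 : DirichletCharacter ℂ p) n) * fun n => ((ArithmeticFunction.moebius n : ℤ) : ℂ)) 10
     = ((∑' d : ℕ, cf p d * (1 / (d:ℝ) ^ 10) : ℝ) : ℂ) := by
    rw [LSeries, Complex.ofReal_tsum]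
    congr 1
    ext d
    rcases Nat.eq_zero_or_pos d with rfl | hpos
    · simp [cf_zero]
    rw [LSeries.term_of_ne_zero hpos.ne']
    have hpw : ((d:ℂ) ^ (10:ℂ)) = (d:ℂ) ^ (10:ℕ) := by exact_mod_cast Complex.cpow_natCast (d:ℂ) 10
    rw [hpw]
    simp only [Pi.mul_apply, cf]
    split_ifs with h
    · rw [MulChar.map_nonunit]
      · simp
      · rw [ZMod.isUnit_iff_coprime, Nat.coprime_comm, hp.coprime_iff_not_dvd]; simpa using h
    · rw [MulChar.one_apply]
      · push_cast; ring
      · rw [ZMod.isUnit_iff_coprime, Nat.coprime_comm, hp.coprime_iff_not_dvd]; exact h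
  rw [h3, ← zeta_re.1] at h1
  have hpw : ((p:ℂ) ^ (-10:ℂ)) = ((p:ℂ) ^ (10:ℕ))⁻¹ := by
    rw [Complex.cpow_neg]; congr 1; exact_mod_cast Complex.cpow_natCast (p:ℂ) 10
  rw [hpw] at h1
  have h4 : (1 - ((p:ℝ) ^ 10)⁻¹) * (riemannZeta 10).re * (∑' d : ℕ, cf p d * (1 / (d:ℝ) ^ 10)) = 1 := by
    apply Complex.ofReal_injective
    rw [Complex.ofReal_mul, Complex.ofReal_mul]
    push_cast at h1 ⊢
    exact h1
  have hz := zeta_re.2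
  have hp1 : (1:ℝ) < (p:ℝ) ^ 10 := one_lt_pow₀ (by exact_mod_cast hp.one_lt) (by norm_num)
  have h5 : (p:ℝ) ^ 10 - 1 ≠ 0 := by linarith
  have h6 : ∑' d : ℕ, cf p d * (1 / (d:ℝ) ^ 10) = ((p : ℝ) ^ 10 / ((p : ℝ) ^ 10 - 1)) * (1 / (riemannZeta 10).re) := by
    have hq : (p:ℝ)^10 ≠ 0 := by linarith
    generalize (∑' d : ℕ, cf p d * (1 / (d:ℝ) ^ 10)) = T at h4 ⊢
    generalize (p:ℝ)^10 = P at *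
    field_simp at h4 ⊢
    linarith
  rw [← h6]
  exact hs.hasSum

theorem stmt_12 :
    ∃ K : ℝ, 0 < K ∧ ∀ (p : ℕ), p.Prime → 5 ≤ p → ∀ (X : ℝ), (p : ℝ) ^ 3 ≤ X →
      |({AB ∈ Efam X | ¬ (p : ℤ) ∣ (4 * AB.1 ^ 3 + 27 * AB.2 ^ 2)}.ncard : ℝ)
          - (((p : ℝ) ^ 2 - p) / (p : ℝ) ^ 2) * ((p : ℝ) ^ 10 / ((p : ℝ) ^ 10 - 1))
            * (4 / (riemannZeta 10).re) * X ^ ((5 : ℝ) / 6)|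
        ≤ K * (p : ℝ) * X ^ ((1 : ℝ) / 2) := by
  have hs6 : Summable (fun n : ℕ => 1 / (n:ℝ) ^ 6) := Real.summable_one_div_nat_pow.mpr (by norm_num)
  refine ⟨30 * ∑' n : ℕ, 1 / (n:ℝ) ^ 6, ?_, ?_⟩
  · have := hs6.tsum_pos (fun n => by positivity) 1 (by norm_num)
    positivity
  intro p hp hp5 X hX
  have : Fact p.Prime := ⟨hp⟩
  have hp0 : (0:ℝ) < p := by exact_mod_cast hp.pos
  have hX0 : 0 ≤ X := le_trans (by positivity) hX
  set t := X ^ ((1:ℝ) / 6) with htdef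
  have ht : 0 ≤ t := by positivity
  have e6 : X = t ^ 6 := by
    rw [htdef, ← Real.rpow_natCast, ← Real.rpow_mul hX0]; norm_num
  have e5 : X ^ ((5:ℝ) / 6) = t ^ 5 := by
    rw [htdef, ← Real.rpow_natCast, ← Real.rpow_mul hX0]; norm_num
  have e3 : X ^ ((1:ℝ) / 2) = t ^ 3 := by
    rw [htdef, ← Real.rpow_natCast, ← Real.rpow_mul hX0]; norm_num
  rw [e5, e3]
  have hc := count_eq p hp t ht
  rw [← e6] at hc
  have hm := (cf_sum p hp).mul_left (4 * (1 - 1 / (p:ℝ)) * t ^ 5)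
  have hsub := hc.sub hm
  have emain : (((p : ℝ) ^ 2 - p) / (p : ℝ) ^ 2) * ((p : ℝ) ^ 10 / ((p : ℝ) ^ 10 - 1))
            * (4 / (riemannZeta 10).re) * t ^ 5 = (4 * (1 - 1 / (p:ℝ)) * t ^ 5) * (((p : ℝ) ^ 10 / ((p : ℝ) ^ 10 - 1)) * (1 / (riemannZeta 10).re)) := by
    have : ((p : ℝ) ^ 2 - p) / (p : ℝ) ^ 2 = 1 - 1 / p := by field_simp
    rw [this]; ring
  rw [emain, ← hsub.tsum_eq, ← Real.norm_eq_abs]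
  have hg : HasSum (fun n : ℕ => 30 * p * t ^ 3 * (1 / (n:ℝ) ^ 6)) (30 * p * t ^ 3 * ∑' n : ℕ, 1 / (n:ℝ) ^ 6) :=
    hs6.hasSum.mul_left _
  refine (tsum_of_norm_bounded hg ?_).trans (le_of_eq (by ring))
  intro d
  rcases Nat.eq_zero_or_pos d with rfl | hpos
  · simp [cf_zero]
  have hd : (0:ℝ) < d := by exact_mod_cast hpos
  have hb := good_count_t p hp5 (t / d ^ 2) (by positivity)
  have e : cf p d * ((gd p ((t / d ^ 2) ^ 2) ((t / d ^ 2) ^ 3)).card : ℝ) - 4 * (1 - 1 / (p:ℝ)) * t ^ 5 * (cf p d * (1 / (d:ℝ) ^ 10))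
     = cf p d * (((gd p ((t / d ^ 2) ^ 2) ((t / d ^ 2) ^ 3)).card : ℝ) - 4 * (1 - 1 / p) * (t / d ^ 2) ^ 5) := by
    rw [div_pow t _ 5, ← pow_mul]; ring
  rw [e, Real.norm_eq_abs, abs_mul]
  calc _ ≤ 1 * (30 * p * (t / d ^ 2) ^ 3) := mul_le_mul (cf_abs p d) hb (abs_nonneg _) (by norm_num)
    _ = _ := by rw [div_pow t _ 3, ← pow_mul]; ring
end

section
/- There is an absolute constant K such that for every prime p ≥ 5 and every real X with p³ ≤ X, the number of pairs (A,B) ∈ E(X) with p ∣ 4A³+27B² and p ∤ A (i.e. the elliptic curves y² = x³+Ax+B in the family with multiplicative reduction at p) differs from ((p−1)/p²)·(p^{10}/(p^{10}−1))·(4/ζ(10))·X^{5/6} by at most K·X^{1/2}, where ζ is the Riemann zeta function. -/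
open Finset
lemma cnt_s14 (p : ℕ) (hp : 0 < p) (r : ℝ) (hr : 0 ≤ r) (v : ZMod p) :
    |((#{n ∈ Icc (-⌊r⌋) ⌊r⌋ | ((n : ℤ) : ZMod p) = v} : ℕ) : ℝ) - 2 * r / p| ≤ 2 := by
  obtain ⟨w, rfl⟩ := ZMod.intCast_surjective v
  have h1 : ({n ∈ Icc (-⌊r⌋) ⌊r⌋ | ((n : ℤ) : ZMod p) = (w : ZMod p)}) =
      {n ∈ Ioc (-⌊r⌋ - 1) ⌊r⌋ | n ≡ w [ZMOD (p : ℤ)]} := by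
    ext n
    simp only [mem_filter, mem_Icc, mem_Ioc, ZMod.intCast_eq_intCast_iff]
    constructor <;> rintro ⟨⟨h, h'⟩, h2⟩ <;> exact ⟨⟨by omega, h'⟩, h2⟩
  have h2 := Int.Ioc_filter_modEq_card (-⌊r⌋ - 1) ⌊r⌋ (r := (p : ℤ)) (by exact_mod_cast hp) w
  rw [h1]
  have hm : (0:ℤ) ≤ ⌊r⌋ := Int.floor_nonneg.mpr hr
  have hpq : (0:ℚ) < p := by exact_mod_cast hp
  rw [max_eq_left] at h2
  swap
  · rw [sub_nonneg]
    apply Int.floor_le_floor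
    push_cast
    gcongr
    have : (0:ℚ) ≤ (⌊r⌋:ℤ) := by exact_mod_cast hm
    linarith
  have h3 : ((#{n ∈ Ioc (-⌊r⌋ - 1) ⌊r⌋ | n ≡ w [ZMOD (p : ℤ)]} : ℕ) : ℝ) =
     (((⌊((⌊r⌋ : ℤ) - w : ℚ) / (p:ℤ)⌋ - ⌊((-⌊r⌋ - 1 : ℤ) - w : ℚ) / (p:ℤ)⌋ : ℤ) : ℚ) : ℝ) := by
    rw [← h2]; push_cast; rfl
  rw [h3]
  set m := ⌊r⌋
  have f1 := Int.floor_le (((m : ℤ) - w : ℚ) / (p:ℤ))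
  have f2 := Int.lt_floor_add_one (((m : ℤ) - w : ℚ) / (p:ℤ))
  have f3 := Int.floor_le (((-m - 1 : ℤ) - w : ℚ) / (p:ℤ))
  have f4 := Int.lt_floor_add_one (((-m - 1 : ℤ) - w : ℚ) / (p:ℤ))
  set u := ⌊((m : ℤ) - w : ℚ) / (p:ℤ)⌋
  set u' := ⌊((-m - 1 : ℤ) - w : ℚ) / (p:ℤ)⌋
  have e : (((m : ℤ) - w : ℚ) / (p:ℤ)) - (((-m - 1 : ℤ) - w : ℚ) / (p:ℤ)) = (2 * m + 1) / p := by
    push_cast; ring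
  have g1 : ((u : ℚ) - u') < (2 * m + 1) / p + 1 := by linarith
  have g2 : (2 * m + 1 : ℚ) / p - 1 < ((u : ℚ) - u') := by linarith
  have g1' : ((u : ℝ) - u') < (2 * m + 1) / p + 1 := by exact_mod_cast g1
  have g2' : (2 * m + 1 : ℝ) / p - 1 < ((u : ℝ) - u') := by exact_mod_cast g2
  have k1 : (m : ℝ) ≤ r := Int.floor_le r
  have k2 : r < m + 1 := Int.lt_floor_add_one r
  have hp1 : (1:ℝ) ≤ p := by exact_mod_cast hp
  have j1 : (2 * m + 1 : ℝ) / p ≤ 2 * r / p + 1 := by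
    rw [div_add_one (by positivity)]; gcongr
  have j2 : 2 * r / p - 1 ≤ (2 * m + 1 : ℝ) / p := by
    rw [div_sub_one (by positivity)]; gcongr; linarith
  push_cast
  rw [abs_le]; constructor <;> linarith

theorem mus (p : ℕ) (hp : p.Prime) : ∑' d : ℕ, (if p ∣ d then (0:ℝ) else (ArithmeticFunction.moebius d : ℝ)) / (d:ℝ)^10 = (p:ℝ)^10 / ((p:ℝ)^10 - 1) / (riemannZeta 10).re := by
  have : Fact p.Prime := ⟨hp⟩
  have h1 := DirichletCharacter.LSeries.mul_mu_eq_one (1 : DirichletCharacter ℂ p) (s := 10) (by norm_num)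
  rw [← DirichletCharacter.LFunction_eq_LSeries _ (by norm_num)] at h1
  have h2 := DirichletCharacter.LFunctionTrivChar_eq_mul_riemannZeta (N := p) (s := 10) (by norm_num)
  unfold DirichletCharacter.LFunctionTrivChar at h2
  rw [h2, hp.primeFactors, prod_singleton] at h1
  have h3 : LSeries ((fun n : ℕ => (1 : DirichletCharacter ℂ p) n) * fun n => ((ArithmeticFunction.moebius n : ℤ) : ℂ)) 10
      = ((∑' d : ℕ, (if p ∣ d then (0:ℝ) else (ArithmeticFunction.moebius d : ℝ)) / (d:ℝ)^10 : ℝ) : ℂ) := by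
    rw [LSeries, Complex.ofReal_tsum]
    congr 1; ext d
    rcases eq_or_ne d 0 with rfl | hd
    · simp
    rw [LSeries.term_of_ne_zero hd]
    have e : (d : ℂ) ^ (10 : ℂ) = (d : ℂ) ^ 10 := by exact_mod_cast Complex.cpow_natCast (d:ℂ) 10
    rw [e, Pi.mul_apply]
    by_cases h : p ∣ d
    · have : (d : ZMod p) = 0 := (ZMod.natCast_eq_zero_iff d p).mpr h
      simp [h, this, MulChar.map_nonunit (1 : DirichletCharacter ℂ p) (a := 0) not_isUnit_zero]
    · have : IsUnit (d : ZMod p) := by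
        rw [isUnit_iff_ne_zero, Ne, ZMod.natCast_eq_zero_iff]; exact h
      simp [h, MulChar.one_apply this]
  have e : (p : ℂ) ^ (-10 : ℂ) = (((p : ℝ) ^ 10)⁻¹ : ℝ) := by
    rw [Complex.cpow_neg]
    have : (p : ℂ) ^ (10 : ℂ) = (p : ℂ) ^ 10 := by exact_mod_cast Complex.cpow_natCast (p:ℂ) 10
    rw [this]; push_cast; rfl
  change _ * LSeries ((fun n : ℕ => (1 : DirichletCharacter ℂ p) n) * fun n => ((ArithmeticFunction.moebius n : ℤ) : ℂ)) 10 = 1 at h1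
  rw [h3, e] at h1
  set S := (∑' d : ℕ, (if p ∣ d then (0:ℝ) else (ArithmeticFunction.moebius d : ℝ)) / (d:ℝ)^10 : ℝ)
  have h4 := congrArg Complex.re h1
  rw [show ((1:ℂ) - (((p : ℝ) ^ 10)⁻¹ : ℝ)) * riemannZeta 10 * (S:ℂ) = (((1 - ((p : ℝ) ^ 10)⁻¹) * S : ℝ) : ℂ) * riemannZeta 10 by push_cast; ring, Complex.re_ofReal_mul, Complex.one_re] at h4
  have hz : (riemannZeta 10).re ≠ 0 := by rintro h; rw [h] at h4; simp at h4
  have hp1 : (1:ℝ) < (p:ℝ)^10 := one_lt_pow₀ (by exact_mod_cast hp.one_lt) (by norm_num)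
  have : (p:ℝ)^10 - 1 ≠ 0 := by linarith
  have : (p:ℝ) ≠ 0 := by exact_mod_cast hp.ne_zero
  field_simp at h4 ⊢
  linarith

lemma mobM (A B : ℤ) (hA : A ≠ 0) (n : ℕ) (hn : A.natAbs ≤ n) [Decidable (CondM A B)] :
    ∑ d ∈ range (n+1), (if ((d:ℤ)^4 ∣ A ∧ (d:ℤ)^6 ∣ B) then ArithmeticFunction.moebius d else 0)
      = if CondM A B then 1 else 0 := by
  set S := (range (n+1)).filter (fun d : ℕ => ((d:ℤ)^4 ∣ A ∧ (d:ℤ)^6 ∣ B)) with hS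
  have hmem : ∀ d : ℕ, d ∈ S ↔ ((d:ℤ)^4 ∣ A ∧ (d:ℤ)^6 ∣ B) := by
    intro d
    rw [hS, mem_filter, mem_range, and_iff_right_iff_imp]
    rintro ⟨h, -⟩
    have h1 : (d:ℤ) ∣ A := (dvd_pow_self _ (by norm_num)).trans h
    have h2 := Nat.le_of_dvd (Int.natAbs_pos.mpr hA) (Int.natCast_dvd.mp h1)
    omega
  have h1S : 1 ∈ S := by rw [hmem]; simp
  have hlcm : ∀ d ∈ S, ∀ e ∈ S, Nat.lcm d e ∈ S := by
    intro d hd e he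
    rw [hmem] at *
    have key : ∀ (k : ℕ) (C : ℤ), (d:ℤ)^k ∣ C → (e:ℤ)^k ∣ C → ((Nat.lcm d e : ℕ) : ℤ)^k ∣ C := by
      intro k C h h'
      have h := (Int.natCast_dvd (n := C) (m := d^k)).mp (by exact_mod_cast h)
      have h' := (Int.natCast_dvd (n := C) (m := e^k)).mp (by exact_mod_cast h')
      have := Nat.lcm_dvd h h'
      rw [Nat.pow_lcm_pow] at this
      exact_mod_cast Int.natCast_dvd.mpr this
    exact ⟨key _ _ hd.1 he.1, key _ _ hd.2 he.2⟩
  obtain ⟨D, hD, hmax⟩ := S.exists_max_image id ⟨1, h1S⟩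
  have hD0 : 0 < D := lt_of_lt_of_le one_pos (hmax 1 h1S)
  have hdiv : S = D.divisors := by
    ext d
    rw [Nat.mem_divisors]
    constructor
    · intro hd
      refine ⟨?_, hD0.ne'⟩
      have h := hmax _ (hlcm d hd D hD)
      have h2 : D ∣ Nat.lcm d D := Nat.dvd_lcm_right d D
      have hd0 : d ≠ 0 := by rintro rfl; rw [hmem] at hd; simp [hA] at hd
      have h3 := Nat.le_of_dvd (Nat.pos_of_ne_zero (Nat.lcm_ne_zero hd0 hD0.ne')) h2
      have h4 : Nat.lcm d D = D := le_antisymm h h3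
      rw [← h4]; exact Nat.dvd_lcm_left d D
    · rintro ⟨h, -⟩
      rw [hmem] at hD ⊢
      have h : (d:ℤ) ∣ D := by exact_mod_cast h
      exact ⟨(pow_dvd_pow_of_dvd h 4).trans hD.1, (pow_dvd_pow_of_dvd h 6).trans hD.2⟩
  rw [← sum_filter, ← hS, hdiv, ← ArithmeticFunction.coe_mul_zeta_apply, ArithmeticFunction.moebius_mul_coe_zeta,
    ArithmeticFunction.one_apply]
  have : D = 1 ↔ CondM A B := by
    constructor
    · rintro rfl q hq h4 h6
      have := (hmem q).mpr ⟨h4, h6⟩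
      rw [hdiv] at this
      simp at this
      exact hq.one_lt.ne' this
    · intro h
      by_contra hne
      obtain ⟨q, hq, hqD⟩ := Nat.exists_prime_and_dvd hne
      have : q ∈ S := by rw [hdiv]; exact Nat.mem_divisors.mpr ⟨hqD, hD0.ne'⟩
      rw [hmem] at this
      exact h q hq this.1 this.2
  simp [this]

noncomputable def MS (p : ℕ) (x : ℝ) : Finset (ℤ × ℤ) :=
  (Icc (-⌊x^2⌋) ⌊x^2⌋ ×ˢ Icc (-⌊x^3⌋) ⌊x^3⌋).filter
    (fun AB => (p : ℤ) ∣ (4 * AB.1 ^ 3 + 27 * AB.2 ^ 2) ∧ ¬ (p : ℤ) ∣ AB.1)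

lemma mem_Icc_floor (r : ℝ) (n : ℤ) : n ∈ Icc (-⌊r⌋) ⌊r⌋ ↔ |(n:ℝ)| ≤ r := by
  rw [mem_Icc, ← abs_le, Int.le_floor]; push_cast; rfl

lemma ne_zero_of_prime (p : ℕ) (hp : p.Prime) (h5 : 5 ≤ p) : (2 : ZMod p) ≠ 0 ∧ (3 : ZMod p) ≠ 0 := by
  constructor
  · intro h
    have : ((2:ℕ) : ZMod p) = 0 := by exact_mod_cast h
    rw [ZMod.natCast_eq_zero_iff] at this
    have := Nat.le_of_dvd (by norm_num) this
    omega
  · intro h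
    have : ((3:ℕ) : ZMod p) = 0 := by exact_mod_cast h
    rw [ZMod.natCast_eq_zero_iff] at this
    have := Nat.le_of_dvd (by norm_num) this
    omega

lemma cond_iff (p : ℕ) (A B : ℤ) : ((p : ℤ) ∣ (4 * A ^ 3 + 27 * B ^ 2) ∧ ¬ (p : ℤ) ∣ A) ↔
    (4 * (A : ZMod p)^3 + 27 * (B : ZMod p)^2 = 0 ∧ (A : ZMod p) ≠ 0) := by
  rw [← ZMod.intCast_zmod_eq_zero_iff_dvd, ← ZMod.intCast_zmod_eq_zero_iff_dvd]; push_cast; rfl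

lemma MS_card_sum (p : ℕ) (hp : p.Prime) (h5 : 5 ≤ p) (x : ℝ) [Fact p.Prime] :
    #(MS p x) = ∑ t ∈ (univ : Finset (ZMod p)).erase 0,
      #{n ∈ Icc (-⌊x^2⌋) ⌊x^2⌋ | ((n : ℤ) : ZMod p) = -3 * t^2} *
      #{n ∈ Icc (-⌊x^3⌋) ⌊x^3⌋ | ((n : ℤ) : ZMod p) = 2 * t^3} := by
  obtain ⟨h2, h3⟩ := ne_zero_of_prime p hp h5
  have key : ∀ α β t : ZMod p, ((4 * α^3 + 27 * β^2 = 0 ∧ α ≠ 0) ∧ -3 * β / (2 * α) = t) ↔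
      (t ≠ 0 ∧ α = -3 * t^2 ∧ β = 2 * t^3) := by
    intro α β t
    constructor
    · rintro ⟨⟨h, hα⟩, rfl⟩
      have hβ : β ≠ 0 := by
        rintro rfl
        have : (2:ZMod p)^2 * α^3 = 0 := by linear_combination h
        simp_all
      refine ⟨by simp_all, ?_, ?_⟩
      · field_simp; linear_combination h
      · field_simp; linear_combination h
    · rintro ⟨ht, rfl, rfl⟩
      refine ⟨⟨by ring, ?_⟩, ?_⟩
      · simp_all
      · field_simp
  rw [card_eq_sum_card_fiberwise (f := fun AB : ℤ × ℤ => (-3 * (AB.2 : ZMod p) / (2 * (AB.1 : ZMod p)))) (t := (univ : Finset (ZMod p)).erase 0)]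
  · apply sum_congr rfl
    intro t ht
    rw [← card_product]
    congr 1
    ext ⟨A, B⟩
    have := key A B t
    simp only [MS, mem_filter, mem_product, cond_iff] at *
    have ht := (mem_erase.mp ht).1
    tauto
  · rintro ⟨A, B⟩ h
    have := key A B (-3 * (B : ZMod p) / (2 * (A : ZMod p)))
    simp only [MS, coe_filter, mem_product, Set.mem_ofPred_eq, cond_iff] at h
    simp only [coe_erase, coe_univ, Set.mem_diff, Set.mem_univ, true_and, Set.mem_singleton_iff]
    exact (this.mp ⟨h.2, rfl⟩).1

lemma MS_zero (p : ℕ) (x : ℝ) (hx : 0 < x) (h1 : x < 1) : MS p x = ∅ := by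
  rw [MS, filter_eq_empty_iff]
  rintro ⟨A, B⟩ h
  rw [mem_product, mem_Icc_floor] at h
  have h' : |(A:ℝ)| < 1 := lt_of_le_of_lt h.1 (pow_lt_one₀ hx.le h1 (by norm_num))
  have : A = 0 := by
    rw [← Int.abs_lt_one_iff]; exact_mod_cast h'
  simp [this]

lemma MS_big (p : ℕ) (hp : p.Prime) (h5 : 5 ≤ p) (x : ℝ) (hx : (p:ℝ) ≤ x^2) (h1 : 1 ≤ x) :
    |(#(MS p x) : ℝ) - 4 * ((p:ℝ) - 1) / p^2 * x^5| ≤ 12 * x^3 := by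
  have : Fact p.Prime := ⟨hp⟩
  rw [MS_card_sum p hp h5 x]
  have hc : (#((univ : Finset (ZMod p)).erase 0) : ℝ) = p - 1 := by
    rw [card_erase_of_mem (mem_univ _), card_univ, ZMod.card, Nat.cast_sub hp.one_le]; simp
  have hp0 : (0:ℝ) < p := by exact_mod_cast hp.pos
  have hp1 : (1:ℝ) ≤ p := by exact_mod_cast hp.one_le
  have e : 4 * ((p:ℝ) - 1) / p^2 * x^5 = ∑ t ∈ (univ : Finset (ZMod p)).erase 0, (2 * x^2 / p) * (2 * x^3 / p) := by
    rw [sum_const, nsmul_eq_mul, hc]; field_simp; ring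
  rw [e, Nat.cast_sum, ← sum_sub_distrib]
  refine (abs_sum_le_sum_abs _ _).trans ?_
  have hx23 : x^2 ≤ x^3 := pow_le_pow_right₀ h1 (by norm_num)
  have hb : ∀ t ∈ (univ : Finset (ZMod p)).erase 0, |((#{n ∈ Icc (-⌊x^2⌋) ⌊x^2⌋ | ((n : ℤ) : ZMod p) = -3 * t^2} *
      #{n ∈ Icc (-⌊x^3⌋) ⌊x^3⌋ | ((n : ℤ) : ZMod p) = 2 * t^3} : ℕ) : ℝ) - (2 * x^2 / p) * (2 * x^3 / p)| ≤ 12 * x^3 / p := by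
    intro t _
    have c1 := cnt_s14 p hp.pos (x^2) (by positivity) (-3 * t^2)
    have c2 := cnt_s14 p hp.pos (x^3) (by positivity) (2 * t^3)
    push_cast
    set u := (#{n ∈ Icc (-⌊x^2⌋) ⌊x^2⌋ | ((n : ℤ) : ZMod p) = -3 * t^2} : ℝ)
    set v := (#{n ∈ Icc (-⌊x^3⌋) ⌊x^3⌋ | ((n : ℤ) : ZMod p) = 2 * t^3} : ℝ)
    set a := 2 * x^2 / p with ha
    set b := 2 * x^3 / p with hb
    have ea : a ≤ b := by rw [ha, hb]; gcongr
    have e2 : 2 ≤ a := by rw [ha, le_div_iff₀ hp0]; linarith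
    have : 12 * x^3 / p = 6 * b := by rw [hb]; ring
    rw [this, show u * v - a * b = (u - a) * (v - b) + a * (v - b) + (u - a) * b by ring]
    have k1 : |(u - a) * (v - b)| ≤ 2 * 2 := by rw [abs_mul]; gcongr
    have k2 : |a * (v - b)| ≤ a * 2 := by rw [abs_mul, abs_of_nonneg (by linarith : 0 ≤ a)]; gcongr
    have k3 : |(u - a) * b| ≤ 2 * b := by rw [abs_mul, abs_of_nonneg (by linarith : 0 ≤ b)]; gcongr
    refine (abs_add_three _ _ _).trans ?_
    linarith
  refine (sum_le_sum hb).trans ?_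
  rw [sum_const, nsmul_eq_mul, hc]
  have : ((p:ℝ) - 1) * (12 * x^3 / p) = 12 * x^3 - 12 * x^3 / p := by field_simp
  rw [this]
  have : 0 ≤ 12 * x^3 / p := by positivity
  linarith

lemma MS_small (p : ℕ) (hp : p.Prime) (h5 : 5 ≤ p) (x : ℝ) (hx : x^2 ≤ (p:ℝ)) (h1 : 1 ≤ x) :
    (#(MS p x) : ℝ) ≤ 24 * x^3 := by
  have : Fact p.Prime := ⟨hp⟩
  obtain ⟨h2, h3⟩ := ne_zero_of_prime p hp h5
  have hp0 : (0:ℝ) < p := by exact_mod_cast hp.pos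
  have hx23 : x^2 ≤ x^3 := pow_le_pow_right₀ h1 (by norm_num)
  have h12 : 1 ≤ x^2 := one_le_pow₀ h1
  have hcard : #(MS p x) = ∑ A ∈ Icc (-⌊x^2⌋) ⌊x^2⌋, #{AB ∈ MS p x | AB.1 = A} := by
    apply card_eq_sum_card_fiberwise
    rintro ⟨A, B⟩ h
    simp only [MS, coe_filter, mem_product, Set.mem_ofPred_eq] at h
    exact h.1.1
  have hf : ∀ A ∈ Icc (-⌊x^2⌋) ⌊x^2⌋, (#{AB ∈ MS p x | AB.1 = A} : ℝ) ≤ 4 * x^3 / p + 4 := by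
    intro A _
    rcases ({AB ∈ MS p x | AB.1 = A} : Finset _).eq_empty_or_nonempty with h | ⟨⟨A', B₀⟩, h⟩
    · rw [h]; simp; positivity
    simp only [MS, mem_filter, mem_product, cond_iff] at h
    obtain ⟨⟨-, hB0, -⟩, rfl⟩ := h
    have hsub : ({AB ∈ MS p x | AB.1 = A'} : Finset _) ⊆
       ((({n ∈ Icc (-⌊x^3⌋) ⌊x^3⌋ | ((n : ℤ) : ZMod p) = (B₀ : ZMod p)} : Finset ℤ) ∪
        ({n ∈ Icc (-⌊x^3⌋) ⌊x^3⌋ | ((n : ℤ) : ZMod p) = -(B₀ : ZMod p)} : Finset ℤ))).image (fun B => (A', B)) := by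
      rintro ⟨A, B⟩ h
      simp only [MS, mem_filter, mem_product, cond_iff] at h
      obtain ⟨⟨⟨-, hB⟩, h, -⟩, rfl⟩ := h
      simp only [mem_image, mem_union, mem_filter]
      refine ⟨B, ?_, rfl⟩
      have : (3:ZMod p)^3 * ((B : ZMod p)^2 - (B₀ : ZMod p)^2) = 0 := by linear_combination h - hB0
      have : (B : ZMod p)^2 = (B₀ : ZMod p)^2 := by
        rcases mul_eq_zero.mp this with h | h
        · simp_all
        · exact sub_eq_zero.mp h
      rcases sq_eq_sq_iff_eq_or_eq_neg.mp this with h | h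
      · exact Or.inl ⟨hB, h⟩
      · exact Or.inr ⟨hB, h⟩
    have hle := (card_le_card hsub).trans (card_image_le.trans (card_union_le _ _))
    have c1 := (abs_le.mp (cnt_s14 p hp.pos (x^3) (by positivity) (B₀))).2
    have c2 := (abs_le.mp (cnt_s14 p hp.pos (x^3) (by positivity) (-B₀))).2
    have hle' : (#{AB ∈ MS p x | AB.1 = A'} : ℝ) ≤ (#{n ∈ Icc (-⌊x^3⌋) ⌊x^3⌋ | ((n : ℤ) : ZMod p) = (B₀ : ZMod p)} : ℝ) + #{n ∈ Icc (-⌊x^3⌋) ⌊x^3⌋ | ((n : ℤ) : ZMod p) = -(B₀ : ZMod p)} := by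
      exact_mod_cast hle
    have : 4 * x^3 / p = 2 * x^3 / p + 2 * x^3 / p := by ring
    linarith
  rw [hcard, Nat.cast_sum]
  refine (sum_le_sum hf).trans ?_
  rw [sum_const, nsmul_eq_mul, Int.card_Icc]
  have hm : (0:ℤ) ≤ ⌊x^2⌋ := Int.floor_nonneg.mpr (by positivity)
  have : (((⌊x^2⌋ + 1 - -⌊x^2⌋).toNat : ℤ) : ℝ) ≤ 3 * x^2 := by
    rw [Int.toNat_of_nonneg (by omega)]
    push_cast
    have := Int.floor_le (x^2)
    linarith
  have this : (((⌊x^2⌋ + 1 - -⌊x^2⌋).toNat : ℕ) : ℝ) ≤ 3 * x^2 := by exact_mod_cast this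
  calc _ ≤ 3 * x^2 * (4 * x^3 / p + 4) := by gcongr
    _ = 12 * x^3 * (x^2 / p) + 12 * x^2 := by ring
    _ ≤ 12 * x^3 * 1 + 12 * x^3 := by gcongr; rwa [div_le_one hp0]
    _ = _ := by ring

lemma MS_est (p : ℕ) (hp : p.Prime) (h5 : 5 ≤ p) (x : ℝ) (hx : 0 < x) :
    |(#(MS p x) : ℝ) - 4 * ((p:ℝ) - 1) / p^2 * x^5| ≤ 28 * x^3 := by
  have hp0 : (0:ℝ) < p := by exact_mod_cast hp.pos
  have hp1 : (1:ℝ) ≤ p := by exact_mod_cast hp.one_le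
  have hx3 : 0 < x^3 := by positivity
  have hm0 : 0 ≤ 4 * ((p:ℝ) - 1) / p^2 * x^5 := by
    have : 0 ≤ (p:ℝ) - 1 := by linarith
    positivity
  rcases le_total (p:ℝ) (x^2) with h | h
  · have h1 : 1 ≤ x := by
      by_contra hlt
      have := pow_lt_one₀ hx.le (not_le.mp hlt) (n := 2) (by norm_num)
      linarith
    have := MS_big p hp h5 x h h1
    linarith
  · have hm : 4 * ((p:ℝ) - 1) / p^2 * x^5 ≤ 4 * x^3 := by
      have : ((p:ℝ) - 1) * x^2 ≤ p * p := by gcongr; linarith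
      have : ((p:ℝ) - 1) * x^2 / p^2 ≤ 1 := by rw [div_le_one (by positivity)]; linarith
      calc _ = 4 * x^3 * (((p:ℝ) - 1) * x^2 / p^2) := by ring
        _ ≤ 4 * x^3 * 1 := by gcongr
        _ = _ := by ring
    rcases lt_or_ge x 1 with h1 | h1
    · rw [MS_zero p x hx h1]
      simp only [card_empty, Nat.cast_zero, zero_sub, abs_neg]
      rw [abs_of_nonneg hm0]; linarith
    · have := MS_small p hp h5 x h h1
      have h0 : (0:ℝ) ≤ #(MS p x) := by positivity
      rw [abs_le]; constructor <;> linarith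

lemma MS_scale (p : ℕ) (hp : p.Prime) (x : ℝ) (d : ℕ) (hd : d ≠ 0) :
    #{AB ∈ MS p x | (d:ℤ)^4 ∣ AB.1 ∧ (d:ℤ)^6 ∣ AB.2} = if p ∣ d then 0 else #(MS p (x / d^2)) := by
  have hpz : Prime (p:ℤ) := Nat.prime_iff_prime_int.mp hp
  split_ifs with hpd
  · rw [card_eq_zero, filter_eq_empty_iff]
    rintro ⟨A, B⟩ h ⟨h4, -⟩
    simp only [MS, mem_filter] at h
    apply h.2.2
    have : (p:ℤ) ∣ d := by exact_mod_cast hpd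
    exact (this.trans (dvd_pow_self _ (by norm_num))).trans h4
  · have hd0 : (0:ℝ) < d := by exact_mod_cast Nat.pos_of_ne_zero hd
    have hdz : (d:ℤ) ≠ 0 := by exact_mod_cast hd
    have hpd' : ¬ (p:ℤ) ∣ d := by exact_mod_cast hpd
    symm
    apply card_bij (fun AB _ => ((d:ℤ)^4 * AB.1, (d:ℤ)^6 * AB.2))
    · rintro ⟨A, B⟩ h
      simp only [MS, mem_filter, mem_product, mem_Icc_floor] at h ⊢
      obtain ⟨⟨hA, hB⟩, h1, h2⟩ := h
      refine ⟨⟨⟨?_, ?_⟩, ?_, ?_⟩, dvd_mul_right _ _, dvd_mul_right _ _⟩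
      · push_cast
        rw [abs_mul, abs_of_nonneg (by positivity)]
        calc _ ≤ (d:ℝ)^4 * (x/d^2)^2 := by gcongr
          _ = _ := by field_simp
      · push_cast
        rw [abs_mul, abs_of_nonneg (by positivity)]
        calc _ ≤ (d:ℝ)^6 * (x/d^2)^3 := by gcongr
          _ = _ := by field_simp
      · rw [show 4 * ((d:ℤ)^4 * A)^3 + 27 * ((d:ℤ)^6 * B)^2 = d^12 * (4 * A^3 + 27 * B^2) by ring]
        exact dvd_mul_of_dvd_right h1 _
      · intro h
        rcases hpz.dvd_or_dvd h with h | h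
        · exact hpd' (hpz.dvd_of_dvd_pow h)
        · exact h2 h
    · rintro ⟨A, B⟩ _ ⟨A', B'⟩ _ h
      simp only [Prod.mk.injEq] at h
      obtain ⟨h1, h2⟩ := h
      rw [Prod.mk.injEq]
      exact ⟨mul_left_cancel₀ (pow_ne_zero _ hdz) h1, mul_left_cancel₀ (pow_ne_zero _ hdz) h2⟩
    · rintro ⟨A, B⟩ h
      simp only [MS, mem_filter, mem_product, mem_Icc_floor] at h
      obtain ⟨⟨⟨hA, hB⟩, h1, h2⟩, ⟨A', rfl⟩, ⟨B', rfl⟩⟩ := h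
      refine ⟨(A', B'), ?_, rfl⟩
      simp only [MS, mem_filter, mem_product, mem_Icc_floor]
      refine ⟨⟨?_, ?_⟩, ?_, ?_⟩
      · push_cast at hA
        rw [abs_mul, abs_of_nonneg (by positivity)] at hA
        rw [div_pow, le_div_iff₀ (by positivity)]
        linarith
      · push_cast at hB
        rw [abs_mul, abs_of_nonneg (by positivity)] at hB
        rw [div_pow, le_div_iff₀ (by positivity)]
        linarith
      · rw [show 4 * ((d:ℤ)^4 * A')^3 + 27 * ((d:ℤ)^6 * B')^2 = d^12 * (4 * A'^3 + 27 * B'^2) by ring] at h1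
        rcases hpz.dvd_or_dvd h1 with h | h
        · exact absurd (hpz.dvd_of_dvd_pow h) hpd'
        · exact h
      · exact fun h => h2 (dvd_mul_of_dvd_right h _)

noncomputable def fmu (p d : ℕ) : ℝ := if p ∣ d then (0:ℝ) else (ArithmeticFunction.moebius d : ℝ)

lemma abs_fmu (p d : ℕ) : |fmu p d| ≤ 1 := by
  unfold fmu
  split_ifs
  · simp
  · exact_mod_cast ArithmeticFunction.abs_moebius_le_one

open Classical in
lemma count_tsum (p : ℕ) (hp : p.Prime) (x : ℝ) (hx : 1 ≤ x) :
    HasSum (fun d : ℕ => fmu p d * (#(MS p (x / d^2)) : ℝ)) (#{AB ∈ MS p x | CondM AB.1 AB.2} : ℝ) := by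
  set n := ⌊x^2⌋₊ with hn
  have h1 : ((#{AB ∈ MS p x | CondM AB.1 AB.2} : ℕ) : ℤ) = ∑ d ∈ range (n+1),
      ArithmeticFunction.moebius d * #{AB ∈ MS p x | (d:ℤ)^4 ∣ AB.1 ∧ (d:ℤ)^6 ∣ AB.2} := by
    rw [card_filter]
    push_cast
    have : ∀ AB ∈ MS p x, (if CondM AB.1 AB.2 then (1:ℤ) else 0) = ∑ d ∈ range (n+1),
        (if ((d:ℤ)^4 ∣ AB.1 ∧ (d:ℤ)^6 ∣ AB.2) then ArithmeticFunction.moebius d else 0) := by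
      rintro ⟨A, B⟩ h
      simp only [MS, mem_filter, mem_product, mem_Icc_floor] at h
      symm
      apply mobM
      · rintro rfl; simp at h
      · apply Nat.le_floor
        rw [Nat.cast_natAbs]; push_cast
        exact h.1.1
    rw [sum_congr rfl this, sum_comm]
    apply sum_congr rfl
    intro d _
    rw [← sum_filter, sum_const, nsmul_eq_mul, mul_comm]
  have h2 : ((#{AB ∈ MS p x | CondM AB.1 AB.2} : ℕ) : ℝ) = ∑ d ∈ range (n+1), fmu p d * (#(MS p (x / d^2)) : ℝ) := by
    have : ((#{AB ∈ MS p x | CondM AB.1 AB.2} : ℕ) : ℝ) = (((#{AB ∈ MS p x | CondM AB.1 AB.2} : ℕ) : ℤ) : ℝ) := by simp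
    rw [this, h1]
    push_cast
    apply sum_congr rfl
    intro d _
    rcases eq_or_ne d 0 with rfl | hd
    · simp [fmu]
    rw [MS_scale p hp x d hd, fmu]
    split_ifs <;> simp
  rw [h2]
  apply hasSum_sum_of_ne_finset_zero
  intro d hd
  rw [mem_range, not_lt] at hd
  have hlt : x^2 < d := (Nat.lt_floor_add_one (x^2)).trans_le (by exact_mod_cast hd)
  have hx2 : x ≤ x^2 := le_self_pow₀ hx (by norm_num)
  have hd1 : (1:ℝ) ≤ d := by linarith
  rw [MS_zero p]
  · simp
  · positivity
  · rw [div_lt_one (by positivity)]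
    have : (d:ℝ) ≤ d^2 := le_self_pow₀ hd1 (by norm_num)
    linarith

open Classical in
lemma count_est (p : ℕ) (hp : p.Prime) (h5 : 5 ≤ p) (x : ℝ) (hx : 1 ≤ x) :
    |(#{AB ∈ MS p x | CondM AB.1 AB.2} : ℝ) - (((p:ℝ) - 1) / p^2) * ((p:ℝ)^10 / ((p:ℝ)^10 - 1)) * (4 / (riemannZeta 10).re) * x^5|
      ≤ 28 * (∑' d : ℕ, ((d:ℝ)^6)⁻¹) * x^3 := by
  have hs10 : Summable (fun d : ℕ => ((d:ℝ)^10)⁻¹) := Real.summable_nat_pow_inv.mpr (by norm_num)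
  have hs6 : Summable (fun d : ℕ => ((d:ℝ)^6)⁻¹) := Real.summable_nat_pow_inv.mpr (by norm_num)
  have hsf : Summable (fun d : ℕ => fmu p d / (d:ℝ)^10) := by
    apply Summable.of_norm_bounded hs10
    intro d
    rw [Real.norm_eq_abs, abs_div, div_eq_mul_inv, abs_of_nonneg (by positivity : (0:ℝ) ≤ (d:ℝ)^10)]
    exact mul_le_of_le_one_left (by positivity) (abs_fmu p d)
  have hm := (hsf.hasSum).mul_left (4 * ((p:ℝ) - 1) / p^2 * x^5)
  have hm' := mus p hp
  change ∑' d : ℕ, fmu p d / (d:ℝ)^10 = _ at hm'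
  rw [hm'] at hm
  have hd := (count_tsum p hp x hx).sub hm
  have e : (((p:ℝ) - 1) / p^2) * ((p:ℝ)^10 / ((p:ℝ)^10 - 1)) * (4 / (riemannZeta 10).re) * x^5 =
      4 * ((p:ℝ) - 1) / p^2 * x^5 * ((p:ℝ)^10 / ((p:ℝ)^10 - 1) / (riemannZeta 10).re) := by ring
  rw [e, ← hd.tsum_eq, show 28 * (∑' d : ℕ, ((d:ℝ)^6)⁻¹) * x^3 = (28 * x^3) * (∑' d : ℕ, ((d:ℝ)^6)⁻¹) by ring, ← Real.norm_eq_abs]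
  refine tsum_of_norm_bounded (hs6.hasSum.mul_left (28 * x^3)) ?_
  intro d
  rcases eq_or_ne d 0 with rfl | h0
  · simp [fmu]
  have hd0 : (0:ℝ) < d := by exact_mod_cast Nat.pos_of_ne_zero h0
  have := MS_est p hp h5 (x / d^2) (by positivity)
  rw [show fmu p d * (#(MS p (x / d^2)) : ℝ) - 4 * ((p:ℝ) - 1) / p^2 * x^5 * (fmu p d / (d:ℝ)^10) =
    fmu p d * ((#(MS p (x / d^2)) : ℝ) - 4 * ((p:ℝ) - 1) / p^2 * (x / d^2)^5) by rw [div_pow]; ring,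
    Real.norm_eq_abs, abs_mul]
  calc _ ≤ 1 * (28 * (x / d^2)^3) := by gcongr; exact abs_fmu p d
    _ = _ := by field_simp

open Classical in
lemma disc_est (p : ℕ) (x : ℝ) (hx : 1 ≤ x) :
    (#{AB ∈ MS p x | CondM AB.1 AB.2} : ℝ) - 3 * x^3 ≤ #{AB ∈ MS p x | 4 * AB.1 ^ 3 + 27 * AB.2 ^ 2 ≠ 0 ∧ CondM AB.1 AB.2} ∧
    (#{AB ∈ MS p x | 4 * AB.1 ^ 3 + 27 * AB.2 ^ 2 ≠ 0 ∧ CondM AB.1 AB.2} : ℝ) ≤ #{AB ∈ MS p x | CondM AB.1 AB.2} := by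
  constructor
  · have hsub : ({AB ∈ MS p x | CondM AB.1 AB.2} : Finset _) ⊆
      ({AB ∈ MS p x | 4 * AB.1 ^ 3 + 27 * AB.2 ^ 2 ≠ 0 ∧ CondM AB.1 AB.2} : Finset _) ∪ ({AB ∈ MS p x | 4 * AB.1 ^ 3 + 27 * AB.2 ^ 2 = 0} : Finset _) := by
      intro AB h
      simp only [mem_union, mem_filter] at *
      tauto
    have h1 := (card_le_card hsub).trans (card_union_le _ _)
    have h2 : #{AB ∈ MS p x | 4 * AB.1 ^ 3 + 27 * AB.2 ^ 2 = 0} ≤ #(Icc (-⌊x^3⌋) ⌊x^3⌋) := by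
      apply card_le_card_of_injOn Prod.snd
      · rintro ⟨A, B⟩ h
        simp only [MS, coe_filter, mem_filter, mem_product, Set.mem_ofPred_eq] at h
        exact h.1.1.2
      · rintro ⟨A, B⟩ h ⟨A', B'⟩ h' hB
        simp only [coe_filter, Set.mem_ofPred_eq] at h h' hB
        subst hB
        have : A^3 = A'^3 := by linarith [h.2, h'.2]
        rw [(Odd.strictMono_pow (by decide : Odd 3)).injective this]
    rw [Int.card_Icc] at h2
    have hm : (0:ℤ) ≤ ⌊x^3⌋ := Int.floor_nonneg.mpr (by positivity)
    have h13 : 1 ≤ x^3 := one_le_pow₀ hx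
    have : (((⌊x^3⌋ + 1 - -⌊x^3⌋).toNat : ℤ) : ℝ) ≤ 3 * x^3 := by
      rw [Int.toNat_of_nonneg (by omega)]
      push_cast
      have := Int.floor_le (x^3)
      linarith
    have this : (((⌊x^3⌋ + 1 - -⌊x^3⌋).toNat : ℕ) : ℝ) ≤ 3 * x^3 := by exact_mod_cast this
    have h3 : (#{AB ∈ MS p x | CondM AB.1 AB.2} : ℝ) ≤ #{AB ∈ MS p x | 4 * AB.1 ^ 3 + 27 * AB.2 ^ 2 ≠ 0 ∧ CondM AB.1 AB.2} + #{AB ∈ MS p x | 4 * AB.1 ^ 3 + 27 * AB.2 ^ 2 = 0} := by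
      exact_mod_cast h1
    have h4 : (#{AB ∈ MS p x | 4 * AB.1 ^ 3 + 27 * AB.2 ^ 2 = 0} : ℝ) ≤ (((⌊x^3⌋ + 1 - -⌊x^3⌋).toNat : ℕ) : ℝ) := by exact_mod_cast h2
    linarith
  · have : #{AB ∈ MS p x | 4 * AB.1 ^ 3 + 27 * AB.2 ^ 2 ≠ 0 ∧ CondM AB.1 AB.2} ≤ #{AB ∈ MS p x | CondM AB.1 AB.2} := by
      apply card_le_card
      intro AB h
      simp only [mem_filter] at *
      tauto
    exact_mod_cast this

open Classical in
lemma set_eq (p : ℕ) (x : ℝ) (hx : 1 ≤ x) :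
    {AB ∈ Efam (x^6) | (p : ℤ) ∣ (4 * AB.1 ^ 3 + 27 * AB.2 ^ 2) ∧ ¬ (p : ℤ) ∣ AB.1} =
    (({AB ∈ MS p x | 4 * AB.1 ^ 3 + 27 * AB.2 ^ 2 ≠ 0 ∧ CondM AB.1 AB.2} : Finset (ℤ × ℤ)) : Set (ℤ × ℤ)) := by
  ext ⟨A, B⟩
  have hH : ((max (|A| ^ 3) (B ^ 2) : ℤ) : ℝ) ≤ x^6 ↔ (|(A:ℝ)| ≤ x^2 ∧ |(B:ℝ)| ≤ x^3) := by
    push_cast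
    rw [max_le_iff]
    have e1 : |(A:ℝ)|^3 ≤ x^6 ↔ |(A:ℝ)| ≤ x^2 := by
      rw [show x^6 = (x^2)^3 by ring]
      exact pow_le_pow_iff_left₀ (abs_nonneg _) (by positivity) (by norm_num)
    have e2 : (B:ℝ)^2 ≤ x^6 ↔ |(B:ℝ)| ≤ x^3 := by
      rw [show x^6 = (x^3)^2 by ring, ← sq_abs]
      exact pow_le_pow_iff_left₀ (abs_nonneg _) (by positivity) (by norm_num)
    rw [e1, e2]
  simp only [Efam, Set.mem_ofPred_eq, coe_filter, MS, mem_filter, mem_product, mem_Icc_floor, hH]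
  tauto

theorem stmt_14 :
    ∃ K : ℝ, 0 < K ∧ ∀ (p : ℕ), p.Prime → 5 ≤ p → ∀ (X : ℝ), (p : ℝ) ^ 3 ≤ X →
      |({AB ∈ Efam X | (p : ℤ) ∣ (4 * AB.1 ^ 3 + 27 * AB.2 ^ 2) ∧ ¬ (p : ℤ) ∣ AB.1}.ncard : ℝ)
          - (((p : ℝ) - 1) / (p : ℝ) ^ 2) * ((p : ℝ) ^ 10 / ((p : ℝ) ^ 10 - 1))
            * (4 / (riemannZeta 10).re) * X ^ ((5 : ℝ) / 6)|
        ≤ K * X ^ ((1 : ℝ) / 2) := by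
  classical
  have hpos : (0:ℝ) ≤ ∑' d : ℕ, ((d:ℝ)^6)⁻¹ := tsum_nonneg (fun d => by positivity)
  refine ⟨28 * (∑' d : ℕ, ((d:ℝ)^6)⁻¹) + 3, by positivity, ?_⟩
  intro p hp h5 X hX
  have hX1 : 1 ≤ X := (one_le_pow₀ (by exact_mod_cast hp.one_le)).trans hX
  have hX0 : 0 ≤ X := by linarith
  obtain ⟨x, hx⟩ : ∃ x, x = X ^ ((1:ℝ)/6) := ⟨_, rfl⟩
  have hx1 : 1 ≤ x := by rw [hx]; exact Real.one_le_rpow hX1 (by norm_num)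
  have e6 : X = x^6 := by rw [hx, ← Real.rpow_mul_natCast hX0]; norm_num
  have e5 : X ^ ((5:ℝ)/6) = x^5 := by rw [hx, ← Real.rpow_mul_natCast hX0]; norm_num
  have e3 : X ^ ((1:ℝ)/2) = x^3 := by rw [hx, ← Real.rpow_mul_natCast hX0]; norm_num
  rw [e5, e3, e6, set_eq p x hx1, Set.ncard_coe_finset]
  obtain ⟨d1, d2⟩ := disc_est p x hx1
  have := abs_le.mp (count_est p hp h5 x hx1)
  have hx3 : 0 < x^3 := by positivity
  rw [abs_le, add_mul]
  constructor <;> linarith [this.1, this.2]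
end
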